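/- Let g be a complex simple Lie algebra and G = Aut(g)⁰ its adjoint group acting on V = g by the adjoint representation. Then G is a normal subgroup of G', the quotient G'/G has order 2, and G'/G is generated by the coset of the linear map −ψ, where ψ is the Chevalley involution of g. In particular −ψ ∈ G' and −ψ ∉ G. -/

import Mathlib

noncomputable section

/-- A function `V → ℂ` is a polynomial function if it lies in the subalgebra of
functions generated by the linear functionals, i.e. it is given by a polynomial
in linear coordinates. -/
def IsPolyFun {V : Type*} [AddCommGroup V] [Module ℂ V] (f : V → ℂ) : Prop :=
  f ∈ Algebra.adjoin ℂ (Set.range fun l : V →ₗ[ℂ] ℂ => (l : V → ℂ))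

/-- Given a subgroup `G` of `GL(V)`, the group `G'` of all linear automorphisms of `V`
preserving every `G`-invariant polynomial function on `V`. -/
def primeGroup {V : Type*} [AddCommGroup V] [Module ℂ V]
    (G : Subgroup (V ≃ₗ[ℂ] V)) : Subgroup (V ≃ₗ[ℂ] V) where
  carrier := {φ | ∀ f : V → ℂ, IsPolyFun f →
      (∀ g ∈ G, ∀ v : V, f (g v) = f v) → ∀ v : V, f (φ v) = f v}
  one_mem' := by intro f _ _ v; rfl
  mul_mem' := by
    intro a b ha hb f hf hinv v
    have h2 : f (a (b v)) = f (b v) := ha f hf hinv (b v)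
    exact h2.trans (hb f hf hinv v)
  inv_mem' := by
    intro a ha f hf hinv v
    have h := ha f hf hinv (a⁻¹ v)
    have : a (a⁻¹ v) = v := a.apply_symm_apply v
    rw [this] at h
    exact h.symm

/-- The algebraic exponential of an endomorphism of a finite-dimensional space
(intended for nilpotent endomorphisms, where the series is a finite sum). -/
def endExp {g : Type*} [AddCommGroup g] [Module ℂ g] [FiniteDimensional ℂ g]
    (A : Module.End ℂ g) : Module.End ℂ g :=
  ∑ k ∈ Finset.range (Module.finrank ℂ g + 1), (k.factorial : ℂ)⁻¹ • A ^ k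

/-- The adjoint group `G = Aut(g)⁰` of a semisimple Lie algebra `g`: the subgroup of
`GL(g)` generated by the exponentials of nilpotent inner derivations `ad x`. -/
def adjointGroup (g : Type*) [LieRing g] [LieAlgebra ℂ g] [FiniteDimensional ℂ g] :
    Subgroup (g ≃ₗ[ℂ] g) :=
  Subgroup.closure {u : g ≃ₗ[ℂ] g | ∃ x : g,
    IsNilpotent (LieAlgebra.ad ℂ g x) ∧ (u : g →ₗ[ℂ] g) = endExp (LieAlgebra.ad ℂ g x)}

/-- The subgroup of `GL(g)` fixing a subalgebra `t` pointwise. -/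
def pointwiseStab {g : Type*} [LieRing g] [LieAlgebra ℂ g]
    (t : LieSubalgebra ℂ g) : Subgroup (g ≃ₗ[ℂ] g) where
  carrier := {u | ∀ x ∈ t, u x = x}
  one_mem' := by intro x _; rfl
  mul_mem' := by
    intro a b ha hb x hx
    have : a (b x) = a x := by rw [hb x hx]
    exact this.trans (ha x hx)
  inv_mem' := by
    intro a ha x hx
    conv_lhs => rw [← ha x hx]
    exact a.symm_apply_apply x

/-- The maximal torus of the adjoint group corresponding to a Cartan subalgebra `t`:
the elements of the adjoint group acting trivially on `t`. -/
def maximalTorus (g : Type*) [LieRing g] [LieAlgebra ℂ g] [FiniteDimensional ℂ g]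
    (t : LieSubalgebra ℂ g) : Subgroup (g ≃ₗ[ℂ] g) :=
  adjointGroup g ⊓ pointwiseStab t

/-!
Let `φ ∈ G'`. Then `φ` preserves the polynomials `tr ((ad x) ^ k)`, hence also their polarisations
`tr ((ad x) ^ k * ad y)`, and conjugation by `φ` preserves the space of those endomorphisms `D` for
which `tr ((ad x) ^ k * ad (D x))` vanishes for all `k` and `x`. This space is `ad g`, so `φ`
induces an automorphism `σ` of `g`; by Schur's lemma `φ = c • σ`, and `c = ±1` since both `φ` and
`σ` preserve the Killing form.

An automorphism `σ` in `G'` lies in `G`. All Cartan subalgebras being conjugate under `G`, we may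
assume that `σ` preserves a Cartan subalgebra `t`. A polynomial function on `t` invariant under the
Weyl group, multiplied by the square of the discriminant, extends to a `G`-invariant function on
`g`; this extension is entire, as is seen on slices to the orbits, and of polynomial growth, hence
polynomial. Therefore `σ` preserves the Weyl group invariants on `t`, and as these separate orbits,
it acts on `t` as an element of the Weyl group. An automorphism which fixes `t` pointwise belongs
to the torus `exp (ad t)` and thus to `G`.

Finally `-ψ` fixes `t` pointwise and normalises `G`, and the elements conjugate into `t` are dense,
so `-ψ` preserves every invariant polynomial; but `-ψ` is not an automorphism of `g`.
-/

section LieAut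

open LieAlgebra

/-- The group `Aut(g)` of Lie algebra automorphisms, as a subgroup of `GL(g)`. -/
def lieAut (g : Type*) [LieRing g] [LieAlgebra ℂ g] : Subgroup (g ≃ₗ[ℂ] g) where
  carrier := {u | ∀ x y, u ⁅x, y⁆ = ⁅u x, u y⁆}
  one_mem' _ _ := rfl
  mul_mem' {a b} ha hb x y := (congrArg a (hb x y)).trans (ha (b x) (b y))
  inv_mem' {a} ha x y := by
    rw [LinearEquiv.coe_inv, LinearEquiv.symm_apply_eq, ha]
    simp only [LinearEquiv.apply_symm_apply]

variable {g : Type*} [LieRing g] [LieAlgebra ℂ g]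

lemma toLinearEquiv_mem_lieAut (ψ : g ≃ₗ⁅ℂ⁆ g) : ψ.toLinearEquiv ∈ lieAut g :=
  ψ.map_lie

lemma ad_apply_of_mem_lieAut {a : g ≃ₗ[ℂ] g} (ha : a ∈ lieAut g) (x : g) :
    ad ℂ g (a x) = a.conj (ad ℂ g x) := by
  ext y
  simp only [LinearEquiv.conj_apply_apply, ad_apply, ha _ _, LinearEquiv.apply_symm_apply]

end LieAut

section EndExp

variable {V : Type*} [AddCommGroup V] [Module ℂ V] [FiniteDimensional ℂ V]

lemma endExp_zero : endExp (0 : Module.End ℂ V) = 1 := by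
  rw [endExp, Finset.sum_range_succ', Finset.sum_eq_zero fun k _ => by rw [zero_pow k.succ_ne_zero,
    smul_zero]]
  simp

lemma endExp_conj (a : V ≃ₗ[ℂ] V) (A : Module.End ℂ V) : endExp (a.conj A) = a.conj (endExp A) := by
  simp only [endExp, map_sum, map_smul]
  exact Finset.sum_congr rfl fun k _ =>
    congrArg _ (map_pow (LinearEquiv.conjAlgEquiv ℂ a) A k).symm

lemma pow_finrank_eq_zero_of_isNilpotent {A : Module.End ℂ V} (hA : IsNilpotent A) :
    A ^ Module.finrank ℂ V = 0 := by
  simpa [hA.charpoly_eq_X_pow_finrank] using LinearMap.aeval_self_charpoly A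

lemma endExp_eq_isNilpotent_exp [Module ℚ V] {A : Module.End ℂ V} (hA : IsNilpotent A) :
    endExp A = IsNilpotent.exp A := by
  rw [IsNilpotent.exp_eq_sum (pow_eq_zero_of_le (Nat.le_succ _)
    (pow_finrank_eq_zero_of_isNilpotent hA)), endExp]
  refine Finset.sum_congr rfl fun k _ => LinearMap.ext fun v => ?_
  rw [LinearMap.smul_apply, LinearMap.smul_apply, ← Rat.cast_smul_eq_qsmul ℂ]
  simp

end EndExp

section AdjointGroup

open LieAlgebra

variable {g : Type*} [LieRing g] [LieAlgebra ℂ g] [FiniteDimensional ℂ g]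

lemma exists_mem_lieAut_coe_eq_endExp {x : g} (hx : IsNilpotent (ad ℂ g x)) :
    ∃ u ∈ lieAut g, (u : g →ₗ[ℂ] g) = endExp (ad ℂ g x) := by
  let _ : Module ℚ g := Module.compHom g (algebraMap ℚ ℂ)
  let _ : LieAlgebra ℚ g := { lie_smul := fun c y z => lie_smul (algebraMap ℚ ℂ c) y z }
  have hD : (LieDerivation.ad ℂ g x).toLinearMap = ad ℂ g x :=
    LinearMap.ext fun y => by simp
  have hDx : IsNilpotent (LieDerivation.ad ℂ g x).toLinearMap := hD ▸ hx
  refine ⟨(LieDerivation.exp _ hDx).toLinearEquiv, LieEquiv.map_lie _, ?_⟩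
  rw [endExp_eq_isNilpotent_exp hx, ← hD]
  rfl

lemma adjointGroup_le_lieAut : adjointGroup g ≤ lieAut g := by
  refine (Subgroup.closure_le _).2 ?_
  rintro u ⟨x, hx, hu⟩
  obtain ⟨v, hv, hvx⟩ := exists_mem_lieAut_coe_eq_endExp hx
  rwa [LinearEquiv.toLinearMap_injective (hu.trans hvx.symm)]

lemma exists_mem_adjointGroup_coe_eq_endExp {x : g} (hx : IsNilpotent (ad ℂ g x)) :
    ∃ u ∈ adjointGroup g, (u : g →ₗ[ℂ] g) = endExp (ad ℂ g x) :=
  (exists_mem_lieAut_coe_eq_endExp hx).imp fun _ hu =>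
    ⟨Subgroup.subset_closure ⟨x, hx, hu.2⟩, hu.2⟩

lemma conj_mem_adjointGroup {a u : g ≃ₗ[ℂ] g} (ha : a ∈ lieAut g) (hu : u ∈ adjointGroup g) :
    a * u * a⁻¹ ∈ adjointGroup g := by
  suffices adjointGroup g ≤ (adjointGroup g).comap (MulAut.conj a).toMonoidHom from this hu
  refine (Subgroup.closure_le _).2 ?_
  rintro u ⟨x, hx, hu⟩
  refine Subgroup.subset_closure ⟨a x, ?_, ?_⟩
  · rw [ad_apply_of_mem_lieAut ha]
    exact hx.map (LinearEquiv.conjAlgEquiv ℂ a)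
  · rw [ad_apply_of_mem_lieAut ha, endExp_conj, ← hu]
    rfl

lemma le_primeGroup {V : Type*} [AddCommGroup V] [Module ℂ V] (G : Subgroup (V ≃ₗ[ℂ] V)) :
    G ≤ primeGroup G :=
  fun u hu _ _ hinv => hinv u hu

end AdjointGroup

section PolyFun

variable {V : Type*} [AddCommGroup V] [Module ℂ V] {f h : V → ℂ}

namespace IsPolyFun

lemma linear (l : V →ₗ[ℂ] ℂ) : IsPolyFun fun x => l x :=
  Algebra.subset_adjoin ⟨l, rfl⟩

lemma const (c : ℂ) : IsPolyFun fun _ : V => c :=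
  Subalgebra.algebraMap_mem (Algebra.adjoin ℂ _) c

lemma add (hf : IsPolyFun f) (hh : IsPolyFun h) : IsPolyFun fun x => f x + h x :=
  add_mem hf hh

lemma mul (hf : IsPolyFun f) (hh : IsPolyFun h) : IsPolyFun fun x => f x * h x :=
  mul_mem hf hh

lemma sub (hf : IsPolyFun f) (hh : IsPolyFun h) : IsPolyFun fun x => f x - h x :=
  sub_mem hf hh

lemma pow (hf : IsPolyFun f) (n : ℕ) : IsPolyFun fun x => f x ^ n :=
  pow_mem hf n

lemma sum {ι : Type*} {s : Finset ι} {f : ι → V → ℂ} (hf : ∀ i ∈ s, IsPolyFun (f i)) :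
    IsPolyFun fun x => ∑ i ∈ s, f i x := by
  simpa only [IsPolyFun, ← Finset.sum_fn] using sum_mem hf

lemma prod {ι : Type*} {s : Finset ι} {f : ι → V → ℂ} (hf : ∀ i ∈ s, IsPolyFun (f i)) :
    IsPolyFun fun x => ∏ i ∈ s, f i x := by
  simpa only [IsPolyFun, ← Finset.prod_fn] using prod_mem hf

@[elab_as_elim]
lemma induction {p : (f : V → ℂ) → IsPolyFun f → Prop}
    (const : ∀ c, p (fun _ => c) (const c))
    (linear : ∀ l : V →ₗ[ℂ] ℂ, p (fun x => l x) (linear l))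
    (add : ∀ f h (hf : IsPolyFun f) (hh : IsPolyFun h), p f hf → p h hh →
      p (fun x => f x + h x) (hf.add hh))
    (mul : ∀ f h (hf : IsPolyFun f) (hh : IsPolyFun h), p f hf → p h hh →
      p (fun x => f x * h x) (hf.mul hh))
    {f : V → ℂ} (hf : IsPolyFun f) : p f hf := by
  refine Algebra.adjoin_induction (p := fun f hf => p f hf) ?_ const add mul hf
  rintro _ ⟨l, rfl⟩
  exact linear l

lemma comp_linear {W : Type*} [AddCommGroup W] [Module ℂ W] (hf : IsPolyFun f) (L : W →ₗ[ℂ] V) :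
    IsPolyFun fun x => f (L x) := by
  induction hf using IsPolyFun.induction with
  | const c => exact const c
  | linear l => exact linear (l ∘ₗ L)
  | add f h _ _ hf hh => exact hf.add hh
  | mul f h _ _ hf hh => exact hf.mul hh

lemma eval_mvPolynomial {ι : Type*} (p : MvPolynomial ι ℂ) (c : ι → V →ₗ[ℂ] ℂ) :
    IsPolyFun fun x => MvPolynomial.eval (fun i => c i x) p := by
  induction p using MvPolynomial.induction_on with
  | C a => simpa using const a
  | add p q hp hq => simpa using hp.add hq
  | mul_X p i hp => simpa using hp.mul (linear (c i))

lemma eval_polynomial (p : Polynomial ℂ) (l : V →ₗ[ℂ] ℂ) : IsPolyFun fun x => p.eval (l x) := by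
  induction p using Polynomial.induction_on' with
  | add p q hp hq => simpa using hp.add hq
  | monomial n a => simpa using (const a).mul ((linear l).pow n)

lemma coeff_charpoly [FiniteDimensional ℂ V] {W : Type*} [AddCommGroup W] [Module ℂ W]
    [FiniteDimensional ℂ W] (L : V →ₗ[ℂ] Module.End ℂ W) (k : ℕ) :
    IsPolyFun fun x => (L x).charpoly.coeff k := by
  let b := Module.finBasis ℂ V
  refine (congrArg IsPolyFun (funext fun x => ?_)).mp
    (eval_mvPolynomial ((L.polyCharpoly b).coeff k) b.coord)
  exact L.polyCharpoly_coeff_eval b x k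

lemma exists_polynomial_eval_line (hf : IsPolyFun f) (x v : V) :
    ∃ p : Polynomial ℂ, ∀ s : ℂ, f (x + s • v) = p.eval s := by
  induction hf using IsPolyFun.induction with
  | const c => exact ⟨.C c, by simp⟩
  | linear l => exact ⟨.C (l x) + .C (l v) * .X, fun s => by simp [mul_comm s]⟩
  | add f h _ _ hf hh =>
    obtain ⟨p, hp⟩ := hf
    obtain ⟨q, hq⟩ := hh
    exact ⟨p + q, by simp [hp, hq]⟩
  | mul f h _ _ hf hh =>
    obtain ⟨p, hp⟩ := hf
    obtain ⟨q, hq⟩ := hh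
    exact ⟨p * q, by simp [hp, hq]⟩

lemma exists_polynomial_eval_line_ne_zero (hf : IsPolyFun f) {x y : V} (hy : f y ≠ 0) :
    ∃ p : Polynomial ℂ, p ≠ 0 ∧ ∀ s : ℂ, f (x + s • (y - x)) = p.eval s := by
  obtain ⟨p, hp⟩ := hf.exists_polynomial_eval_line x (y - x)
  refine ⟨p, ?_, hp⟩
  rintro rfl
  exact hy (by simpa using hp 1)

lemma eq_zero_of_forall_ne_zero (hf : IsPolyFun f) (hh : IsPolyFun h)
    (hfh : ∀ x, h x ≠ 0 → f x = 0) {y : V} (hy : h y ≠ 0) (x : V) : f x = 0 := by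
  obtain ⟨p, hp⟩ := hf.exists_polynomial_eval_line x (y - x)
  obtain ⟨q, hq0, hq⟩ := hh.exists_polynomial_eval_line_ne_zero (x := x) hy
  have hpq : p * q = 0 := Polynomial.funext fun s => by
    rw [Polynomial.eval_mul, ← hp, ← hq, Polynomial.eval_zero, mul_eq_zero, or_iff_not_imp_right]
    exact hfh _
  simpa [(mul_eq_zero.1 hpq).resolve_right hq0] using hp 0

end IsPolyFun

end PolyFun

section PolyFunNormed

variable {V : Type*} [NormedAddCommGroup V] [NormedSpace ℂ V] {f : V → ℂ}

namespace IsPolyFun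

lemma eq_zero_of_eventuallyEq_zero (hf : IsPolyFun f) {x : V} (hfx : ∀ᶠ y in nhds x, f y = 0) :
    f = 0 := by
  by_contra hne
  obtain ⟨y, hy⟩ := Function.ne_iff.1 hne
  obtain ⟨p, hp0, hp⟩ := hf.exists_polynomial_eval_line_ne_zero (x := x) hy
  have hline : Filter.Tendsto (fun s : ℂ => x + s • (y - x)) (nhds 0) (nhds x) :=
    Continuous.tendsto' (by fun_prop) _ _ (by simp)
  refine hp0 (Polynomial.eq_zero_of_infinite_isRoot p ?_)
  refine (infinite_of_mem_nhds 0 (hline.eventually hfx)).mono fun s hs => ?_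
  exact (hp s).symm.trans hs

lemma isPreconnected_setOf_ne_zero (hf : IsPolyFun f) : IsPreconnected {x | f x ≠ 0} := by
  refine isPreconnected_of_forall_pair fun x hx y hy => ?_
  obtain ⟨p, hp0, hp⟩ := hf.exists_polynomial_eval_line_ne_zero (x := x) hy
  have hroots : IsConnected {s : ℂ | p.IsRoot s}ᶜ :=
    (Polynomial.finite_setOfPred_isRoot hp0).countable.isConnected_compl_of_one_lt_rank (by simp)
  refine ⟨(fun s : ℂ => x + s • (y - x)) '' {s | p.IsRoot s}ᶜ, ?_, ⟨0, ?_, by simp⟩,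
    ⟨1, ?_, by simp⟩, hroots.isPreconnected.image _ (by fun_prop)⟩
  · rintro _ ⟨s, hs, rfl⟩
    simpa [hp] using hs
  · simpa [← hp] using hx
  · simpa [← hp] using hy

variable [FiniteDimensional ℂ V]

lemma differentiable (hf : IsPolyFun f) : Differentiable ℂ f := by
  induction hf using IsPolyFun.induction with
  | const c => fun_prop
  | linear l => exact (LinearMap.toContinuousLinearMap l).differentiable
  | add f h _ _ hf hh => exact hf.add hh
  | mul f h _ _ hf hh => exact hf.mul hh

end IsPolyFun

end PolyFunNormed

section HasPolyGrowth

open Asymptotics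

variable {V : Type*} [AddCommGroup V] [Module ℂ V] [FiniteDimensional ℂ V]

/-- Polynomial growth of a function on the whole space, rather than only near infinity. The
maximum norm in the coordinates of a basis makes sense on a space without a norm. -/
def HasPolyGrowth (f : V → ℂ) : Prop :=
  ∃ N : ℕ, f =O[⊤] fun x => (1 + ‖(Module.finBasis ℂ V).equivFun x‖) ^ N

namespace HasPolyGrowth

variable {f h : V → ℂ}

lemma of_norm_le (hh : HasPolyGrowth h) (hfh : ∀ x, ‖f x‖ ≤ ‖h x‖) : HasPolyGrowth f :=
  hh.imp fun _ hN => (IsBigO.of_bound' (.of_forall hfh)).trans hN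

lemma norm (hf : HasPolyGrowth f) : HasPolyGrowth fun x => (‖f x‖ : ℂ) :=
  hf.of_norm_le fun x => by simp

lemma const (c : ℂ) : HasPolyGrowth fun _ : V => c :=
  ⟨0, by simpa using isBigO_const_const c (one_ne_zero (α := ℝ)) ⊤⟩

lemma mul (hf : HasPolyGrowth f) (hh : HasPolyGrowth h) : HasPolyGrowth fun x => f x * h x := by
  obtain ⟨N, hN⟩ := hf
  obtain ⟨M, hM⟩ := hh
  exact ⟨N + M, by simpa only [pow_add] using hN.mul hM⟩

lemma add (hf : HasPolyGrowth f) (hh : HasPolyGrowth h) : HasPolyGrowth fun x => f x + h x := by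
  obtain ⟨N, hN⟩ := hf
  obtain ⟨M, hM⟩ := hh
  have hmono : ∀ {N M : ℕ}, N ≤ M → (fun x : V => (1 + ‖(Module.finBasis ℂ V).equivFun x‖) ^ N)
      =O[⊤] fun x => (1 + ‖(Module.finBasis ℂ V).equivFun x‖) ^ M := fun hNM =>
    .of_norm_le fun x => by
      rw [Real.norm_of_nonneg (by positivity)]
      exact pow_le_pow_right₀ (le_add_of_nonneg_right (norm_nonneg _)) hNM
  exact ⟨N + M, (hN.trans (hmono (N.le_add_right M))).add (hM.trans (hmono (M.le_add_left N)))⟩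

lemma sum {ι : Type*} {s : Finset ι} {f : ι → V → ℂ} (hf : ∀ i ∈ s, HasPolyGrowth (f i)) :
    HasPolyGrowth fun x => ∑ i ∈ s, f i x := by
  simpa only [← Finset.sum_fn] using Finset.sum_induction f HasPolyGrowth
    (fun _ _ => add) (const 0) hf

end HasPolyGrowth

lemma IsPolyFun.hasPolyGrowth_comp {X : Type*} [AddCommGroup X] [Module ℂ X] {f : X → ℂ}
    (hf : IsPolyFun f) {c : V → X} (hc : ∀ l : X →ₗ[ℂ] ℂ, HasPolyGrowth fun x => l (c x)) :
    HasPolyGrowth fun x => f (c x) := by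
  induction hf using IsPolyFun.induction with
  | const a => exact .const a
  | linear l => exact hc l
  | add f h _ _ hf hh => exact hf.add hh
  | mul f h _ _ hf hh => exact hf.mul hh

lemma IsPolyFun.hasPolyGrowth {f : V → ℂ} (hf : IsPolyFun f) : HasPolyGrowth f := by
  refine hf.hasPolyGrowth_comp (c := id) fun l => ?_
  let b := Module.finBasis ℂ V
  let L := LinearMap.toContinuousLinearMap (l ∘ₗ b.equivFun.symm.toLinearMap)
  refine ⟨1, .of_bound ‖L‖ (.of_forall fun x => ?_)⟩
  have hL : ‖l x‖ ≤ ‖L‖ * ‖b.equivFun x‖ := by simpa [L] using L.le_opNorm (b.equivFun x)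
  rw [pow_one, Real.norm_of_nonneg (by positivity)]
  exact hL.trans (by gcongr; linarith)

/-- By Cauchy's bound for the roots of the characteristic polynomial of `L x`. -/
lemma hasPolyGrowth_of_hasEigenvalue {W : Type*} [AddCommGroup W] [Module ℂ W]
    [FiniteDimensional ℂ W] (L : V →ₗ[ℂ] Module.End ℂ W) {μ : V → ℂ}
    (hμ : ∀ x, μ x ≠ 0 → (L x).HasEigenvalue (μ x)) : HasPolyGrowth μ := by
  have hcoeff := fun k => (IsPolyFun.coeff_charpoly L k).hasPolyGrowth.norm
  refine ((HasPolyGrowth.sum (s := Finset.range (Module.finrank ℂ W)) fun k _ =>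
    hcoeff k).add (.const 1)).of_norm_le fun x => ?_
  rw [← Complex.ofReal_sum, ← Complex.ofReal_one, ← Complex.ofReal_add, Complex.norm_real,
    Real.norm_of_nonneg (by positivity)]
  obtain hx | hx := eq_or_ne (μ x) 0
  · rw [hx, norm_zero]
    positivity
  · have hroot := (Module.End.hasEigenvalue_iff_isRoot_charpoly _ _).1 (hμ x hx)
    have hsup : (Finset.range (Module.finrank ℂ W)).sup (fun k => ‖(L x).charpoly.coeff k‖₊) ≤
        ∑ k ∈ Finset.range (Module.finrank ℂ W), ‖(L x).charpoly.coeff k‖₊ :=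
      Finset.sup_le fun k hk => Finset.single_le_sum (f := fun k => ‖(L x).charpoly.coeff k‖₊)
        (fun _ _ => zero_le) hk
    have hbound := hroot.norm_lt_cauchyBound (L x).charpoly_monic.ne_zero
    rw [Polynomial.cauchyBound, (L x).charpoly_monic, (L x).charpoly_natDegree, nnnorm_one,
      div_one] at hbound
    simpa only [← NNReal.coe_le_coe, NNReal.coe_add, NNReal.coe_sum, coe_nnnorm, NNReal.coe_one]
      using hbound.le.trans (add_le_add_left hsup 1)

end HasPolyGrowth

section Liouville

open Asymptotics Polynomial

lemma iteratedDeriv_eq_zero_of_isBigO {f : ℂ → ℂ} (hf : Differentiable ℂ f) {N n : ℕ} (hn : N < n)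
    (hfN : f =O[⊤] fun z => (1 + ‖z‖) ^ N) : iteratedDeriv n f 0 = 0 := by
  obtain ⟨C, hC⟩ := isBigO_top.1 hfN
  let p : ℝ[X] := Polynomial.C (n.factorial * C) * (1 + X) ^ N
  have hcauchy : ∀ R : ℝ, 0 < R → ‖iteratedDeriv n f 0‖ ≤ p.eval R / (X ^ n : ℝ[X]).eval R := by
    intro R hR
    have hbound := Complex.norm_iteratedDeriv_le_of_forall_mem_sphere_norm_le n (c := (0 : ℂ))
      (C := C * (1 + R) ^ N) hR hf.diffContOnCl fun z hz => by
        rw [mem_sphere_zero_iff_norm] at hz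
        simpa [hz, abs_of_pos (show 0 < 1 + R by linarith)] using hC z
    simpa [p, mul_assoc] using hbound
  have hdeg : p.degree < (X ^ n : ℝ[X]).degree := by
    have : p.degree ≤ N := by
      simp only [p]
      compute_degree!
    rw [degree_X_pow]
    exact this.trans_lt (by exact_mod_cast hn)
  refine norm_le_zero_iff.1 (ge_of_tendsto (p.div_tendsto_atTop_zero_of_degree_lt _ hdeg) ?_)
  filter_upwards [Filter.eventually_gt_atTop 0] using hcauchy

lemma exists_polynomial_of_isBigO {f : ℂ → ℂ} (hf : Differentiable ℂ f) {N : ℕ}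
    (hfN : f =O[⊤] fun z => (1 + ‖z‖) ^ N) :
    ∃ p : ℂ[X], p.degree < (N + 1 : ℕ) ∧ ∀ z, f z = p.eval z := by
  refine ⟨∑ n ∈ Finset.range (N + 1), monomial n ((n.factorial : ℂ)⁻¹ * iteratedDeriv n f 0),
    mem_degreeLT.1 (sum_mem fun n hn => mem_degreeLT.2 ?_), fun z => ?_⟩
  · exact (degree_monomial_le _ _).trans_lt (by exact_mod_cast Finset.mem_range.1 hn)
  · have hsum := Complex.hasSum_taylorSeries_of_entire hf 0 z
    rw [← hsum.tsum_eq, tsum_eq_sum (s := Finset.range (N + 1)), eval_finsetSum]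
    · refine Finset.sum_congr rfl fun n _ => ?_
      simp only [sub_zero, smul_eq_mul, eval_monomial]
      ring
    · intro n hn
      rw [iteratedDeriv_eq_zero_of_isBigO hf (by simpa using hn) hfN, smul_zero, smul_zero]

lemma eq_sum_lagrange_basis_of_isBigO {f : ℂ → ℂ} (hf : Differentiable ℂ f) {N : ℕ}
    (hfN : f =O[⊤] fun z => (1 + ‖z‖) ^ N) (z : ℂ) :
    f z = ∑ j ∈ Finset.range (N + 1),
      (Lagrange.basis (Finset.range (N + 1)) (fun i => (i : ℂ)) j).eval z * f j := by
  obtain ⟨p, hdeg, hp⟩ := exists_polynomial_of_isBigO hf hfN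
  have hinterp := Lagrange.eq_interpolate (s := Finset.range (N + 1)) (v := fun i : ℕ => (i : ℂ))
    (Nat.cast_injective.injOn) (by rwa [Finset.card_range])
  rw [hp, hinterp, Lagrange.interpolate_apply, eval_finsetSum]
  simp only [eval_mul, eval_C, ← hp, mul_comm]

variable {ι : Type*} [Fintype ι] [DecidableEq ι]

lemma one_add_norm_update_le (z : ι → ℂ) (i : ι) (c : ℂ) :
    1 + ‖Function.update z i c‖ ≤ (1 + ‖z‖) * (1 + ‖c‖) := by
  suffices ‖Function.update z i c‖ ≤ ‖z‖ + ‖c‖ by nlinarith [norm_nonneg z, norm_nonneg c]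
  refine (pi_norm_le_iff_of_nonneg (by positivity)).2 fun k => ?_
  obtain rfl | hk := eq_or_ne k i
  · simp
  · rw [Function.update_of_ne hk]
    exact (norm_le_pi_norm z k).trans (le_add_of_nonneg_right (norm_nonneg c))

/-- Interpolation in the variable `i` writes `F` in terms of functions of the variables in `s`. -/
lemma isPolyFun_of_dependsOn {s : Finset ι} {F : (ι → ℂ) → ℂ} (hFs : DependsOn F s) {N : ℕ}
    (hF : ∀ z i, Differentiable ℂ fun c => F (Function.update z i c))
    (hFN : F =O[⊤] fun z => (1 + ‖z‖) ^ N) : IsPolyFun F := by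
  induction s using Finset.induction_on generalizing F with
  | empty =>
    rw [show F = fun _ => F 0 from funext fun z => hFs (by simp)]
    exact IsPolyFun.const (F 0)
  | insert i s hi ih =>
    obtain ⟨C, hC⟩ := isBigO_top.1 hFN
    have hC0 : 0 ≤ C := (norm_nonneg _).trans (by simpa using hC 0)
    have hbound : ∀ z c, ‖F (Function.update z i c)‖ ≤ C * ((1 + ‖z‖) ^ N * (1 + ‖c‖) ^ N) := by
      intro z c
      refine (hC _).trans ?_
      rw [Real.norm_of_nonneg (by positivity), ← mul_pow]
      gcongr
      exact one_add_norm_update_le z i c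
    have hinterp : ∀ z, F z = ∑ j ∈ Finset.range (N + 1),
        (Lagrange.basis (Finset.range (N + 1)) (fun i => (i : ℂ)) j).eval (z i) *
          F (Function.update z i j) := by
      intro z
      have hgrowth : (fun c => F (Function.update z i c)) =O[⊤] fun c => (1 + ‖c‖) ^ N := by
        refine .of_bound (C * (1 + ‖z‖) ^ N) (.of_forall fun c => ?_)
        rw [Real.norm_of_nonneg (by positivity), mul_assoc]
        exact hbound z c
      simpa using eq_sum_lagrange_basis_of_isBigO (hF z i) hgrowth (z i)
    rw [funext hinterp]
    refine IsPolyFun.sum fun j _ =>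
      (IsPolyFun.eval_polynomial _ (LinearMap.proj i)).mul (ih ?_ ?_ ?_)
    · intro z w hzw
      refine hFs fun k hk => ?_
      obtain rfl | hki := eq_or_ne k i
      · simp
      · simpa [Function.update_of_ne hki] using hzw k (by simpa [hki] using hk)
    · intro z k
      obtain rfl | hki := eq_or_ne k i
      · simp
      · simpa only [Function.update_comm hki] using hF (Function.update z i j) k
    · refine .of_bound (C * (1 + ‖(j : ℂ)‖) ^ N) (.of_forall fun z => ?_)
      rw [Real.norm_of_nonneg (by positivity), mul_right_comm, mul_assoc]
      exact hbound z j

lemma isPolyFun_of_hasPolyGrowth {V : Type*} [NormedAddCommGroup V] [NormedSpace ℂ V]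
    [FiniteDimensional ℂ V] {F : V → ℂ} (hF : Differentiable ℂ F) (hFg : HasPolyGrowth F) :
    IsPolyFun F := by
  let e := (Module.finBasis ℂ V).equivFun.toContinuousLinearEquiv
  have hdiff : Differentiable ℂ fun z => F (e.symm z) := hF.comp e.symm.differentiable
  obtain ⟨N, hN⟩ := hFg
  have hpoly : IsPolyFun fun z => F (e.symm z) :=
    isPolyFun_of_dependsOn (s := Finset.univ) (N := N) (by simpa using dependsOn_univ _)
      (fun z i => hdiff.comp fun c => (hasFDerivAt_update z c).differentiableAt)
      ((hN.comp_tendsto (k := e.symm) Filter.tendsto_top).congr_right fun z =>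
        congrArg (fun w => (1 + ‖w‖) ^ N) (e.apply_symm_apply z))
  simpa using hpoly.comp_linear (e : V →ₗ[ℂ] _)

end Liouville

section Slice

variable {V ι : Type*}

section Algebraic

variable [AddCommGroup V] [Module ℂ V] [FiniteDimensional ℂ V] [Fintype ι]

/-- The product of the exponentials of `c i • A i`, in a fixed but arbitrary order of the
indices. -/
def expProd (A : ι → Module.End ℂ V) (c : ι → ℂ) : Module.End ℂ V :=
  (Finset.univ.toList.map fun i => endExp (c i • A i)).prod

/-- An infinitesimal slice at `h`: the subspace `T` contains `h` and is a complement to the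
directions in which the one-parameter groups generated by the `A i` move `h`. -/
structure IsSlice (T : Submodule ℂ V) (A : ι → Module.End ℂ V) (h : V) : Prop where
  mem : h ∈ T
  bijective : Function.Bijective fun p : T × (ι → ℂ) => (p.1 : V) + ∑ i, p.2 i • A i h

end Algebraic

variable [NormedAddCommGroup V] [NormedSpace ℂ V] [FiniteDimensional ℂ V]

open Topology

lemma hasStrictDerivAt_endExp_smul (A : Module.End ℂ V) :
    HasStrictDerivAt (fun c : ℂ => LinearMap.toContinuousLinearMap (endExp (c • A)))
      (LinearMap.toContinuousLinearMap A) 0 := by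
  have hsum : (fun c : ℂ => LinearMap.toContinuousLinearMap (endExp (c • A))) = fun c =>
      ∑ k ∈ Finset.range (Module.finrank ℂ V + 1),
        c ^ k • LinearMap.toContinuousLinearMap ((k.factorial : ℂ)⁻¹ • A ^ k) := by
    funext c
    simp only [endExp, smul_pow, smul_comm _ (c ^ _), map_sum, map_smul]
  rw [hsum]
  refine (HasStrictDerivAt.fun_sum fun k _ =>
    (hasStrictDerivAt_pow k (0 : ℂ)).smul_const _).congr_deriv ?_
  rw [Finset.sum_eq_single 1]
  · simp
  · rintro (_ | _ | k) _ hk <;> simp at hk ⊢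
  · intro h
    have : Subsingleton V := Module.finrank_zero_iff.1 (by simpa using h)
    exact Subsingleton.elim _ _

lemma hasStrictFDerivAt_list_prod_endExp [Finite ι] (A : ι → Module.End ℂ V) (v : V) (l : List ι) :
    HasStrictFDerivAt
      (fun w : V × (ι → ℂ) => (l.map fun i => endExp (w.2 i • A i)).prod w.1)
      (.fst ℂ V (ι → ℂ) + (l.map fun i =>
        ((ContinuousLinearMap.proj i).comp (.snd ℂ V (ι → ℂ))).smulRight (A i v)).sum) (v, 0) := by
  have := Fintype.ofFinite ι
  induction l with
  | nil => simpa using hasStrictFDerivAt_fst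
  | cons i l ih =>
    rw [List.map_cons, List.sum_cons]
    let p : V × (ι → ℂ) →L[ℂ] ℂ := (ContinuousLinearMap.proj i).comp (.snd ℂ V (ι → ℂ))
    have hexp := HasStrictFDerivAt.comp (v, (0 : ι → ℂ))
      (hasStrictDerivAt_endExp_smul (A i)).hasStrictFDerivAt p.hasStrictFDerivAt
    refine (hexp.clm_apply ih).congr_fderiv ?_
    ext w <;> simp [p, endExp_zero, add_comm, add_left_comm]

variable [Fintype ι]

lemma hasStrictFDerivAt_expProd (A : ι → Module.End ℂ V) (v : V) :
    HasStrictFDerivAt (fun w : V × (ι → ℂ) => expProd A w.2 w.1)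
      (.fst ℂ V (ι → ℂ) + ∑ i,
        ((ContinuousLinearMap.proj i).comp (.snd ℂ V (ι → ℂ))).smulRight (A i v)) (v, 0) := by
  rw [← Finset.sum_map_toList]
  exact hasStrictFDerivAt_list_prod_endExp A v Finset.univ.toList

namespace IsSlice

variable {T : Submodule ℂ V} {A : ι → Module.End ℂ V} {h : V}

/-- The inverse function theorem for `(y, c) ↦ expProd A c y` at `(h, 0)`. -/
lemma exists_retraction (hs : IsSlice T A h) :
    ∃ τ : V → V, DifferentiableAt ℂ τ h ∧ τ h = h ∧
      ∀ᶠ x in 𝓝 h, τ x ∈ T ∧ ∃ c, expProd A c (τ x) = x := by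
  let w₀ : T × (ι → ℂ) := (⟨h, hs.mem⟩, 0)
  let Φ : T × (ι → ℂ) → V := fun w => expProd A w.2 w.1
  have hΦ := HasStrictFDerivAt.comp w₀ (hasStrictFDerivAt_expProd A h)
    (T.subtypeL.prodMap (.id ℂ (ι → ℂ))).hasStrictFDerivAt
  have hbij : Function.Bijective
      (T.subtype.coprod (Fintype.linearCombination ℂ fun i => A i h)) := hs.bijective
  let e : (T × (ι → ℂ)) ≃L[ℂ] V := (LinearEquiv.ofBijective _ hbij).toContinuousLinearEquiv
  replace hΦ : HasStrictFDerivAt Φ (e : T × (ι → ℂ) →L[ℂ] V) w₀ := by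
    refine hΦ.congr_fderiv ?_
    ext w <;> simp [e, Fintype.linearCombination_apply]
  have hΦw₀ : Φ w₀ = h := by simp [Φ, w₀, expProd, endExp_zero]
  have hinv := hΦ.to_localInverse
  have hright := hΦ.eventually_right_inverse
  have hleft := hΦ.localInverse_apply_image
  rw [hΦw₀] at hinv hright hleft
  refine ⟨fun x => (hΦ.localInverse Φ e w₀ x).1, ?_, congrArg (fun w => (w.1 : V)) hleft, ?_⟩
  · exact (T.subtypeL.comp (.fst ℂ T (ι → ℂ))).differentiableAt.comp h
      hinv.hasFDerivAt.differentiableAt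
  · filter_upwards [hright] with x hx using ⟨Subtype.coe_prop _, _, hx⟩

lemma eventually_exists_expProd_eq (hs : IsSlice T A h) {U : Set V} (hU : U ∈ 𝓝 h) :
    ∀ᶠ x in 𝓝 h, ∃ y ∈ T, y ∈ U ∧ ∃ c, expProd A c y = x := by
  obtain ⟨τ, hτ, hτh, hτx⟩ := hs.exists_retraction
  have hτU : ∀ᶠ x in 𝓝 h, τ x ∈ U := hτ.continuousAt.eventually (by rwa [hτh])
  filter_upwards [hτU, hτx] with x hxU hx using ⟨τ x, hx.1, hxU, hx.2⟩

lemma differentiableAt (hs : IsSlice T A h) {U : Set V} (hU : U ∈ 𝓝 h) {f F : V → ℂ}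
    (hf : DifferentiableAt ℂ f h) (hF : ∀ y ∈ T, y ∈ U → ∀ c, F (expProd A c y) = f y) :
    DifferentiableAt ℂ F h := by
  obtain ⟨τ, hτ, hτh, hτx⟩ := hs.exists_retraction
  have hτU : ∀ᶠ x in 𝓝 h, τ x ∈ U := hτ.continuousAt.eventually (by rwa [hτh])
  rw [← hτh] at hf
  refine (hf.comp h hτ).congr_of_eventuallyEq ?_
  filter_upwards [hτU, hτx] with x hxU ⟨hxT, c, hc⟩
  rw [Function.comp_apply, ← hF _ hxT hxU c, hc]

end IsSlice

end Slice

section Locality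

open Asymptotics Topology

variable {V : Type*} [NormedAddCommGroup V] [NormedSpace ℂ V] {f k : V → ℂ} {x : V}

lemma HasPolyGrowth.isBigO_one_nhds [FiniteDimensional ℂ V] (hk : HasPolyGrowth k) (x : V) :
    k =O[𝓝 x] fun _ => (1 : ℝ) := by
  obtain ⟨N, hN⟩ := hk
  have hcont : Continuous fun z : V => (1 + ‖(Module.finBasis ℂ V).equivFun z‖) ^ N := by
    have := (Module.finBasis ℂ V).equivFun.toLinearMap.continuous_of_finiteDimensional
    exact (continuous_const.add this.norm).pow N
  exact (hN.mono le_top).trans ((hcont.tendsto x).isBigO_one ℝ)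

lemma differentiableAt_sq_mul_of_isBigO_one (hf : DifferentiableAt ℂ f x) (hfx : f x = 0)
    (hk : k =O[𝓝 x] fun _ => (1 : ℝ)) : DifferentiableAt ℂ (fun z => f z ^ 2 * k z) x := by
  have hsq : HasFDerivAt (fun z => f z ^ 2) (0 : V →L[ℂ] ℂ) x :=
    (hf.hasFDerivAt.pow 2).congr_fderiv (by ext; simp [hfx])
  have hmul : HasFDerivAt (fun z => f z ^ 2 * k z) (0 : V →L[ℂ] ℂ) x := by
    rw [hasFDerivAt_iff_isLittleO] at hsq ⊢
    simp only [hfx, zero_pow two_ne_zero, zero_mul, sub_zero, zero_apply] at hsq ⊢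
    simpa using hsq.norm_right.mul_isBigO hk
  exact hmul.differentiableAt

end Locality

section CoordNorm

open Topology

variable (V : Type*) [AddCommGroup V] [Module ℂ V] [FiniteDimensional ℂ V]

/-- The maximum norm in the coordinates of a basis, installed inside proofs in order to do calculus
on a finite-dimensional space which carries no norm. -/
abbrev coordNormedAddCommGroup : NormedAddCommGroup V :=
  .induced V _ (Module.finBasis ℂ V).equivFun.toLinearMap (Module.finBasis ℂ V).equivFun.injective

/-- The normed space structure for `coordNormedAddCommGroup`. -/
abbrev coordNormedSpace : @NormedSpace ℂ V _ (coordNormedAddCommGroup V).toSeminormedAddCommGroup :=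
  .induced ℂ V _ (Module.finBasis ℂ V).equivFun.toLinearMap

variable {V} {ι : Type*} [Fintype ι] {T : Submodule ℂ V} {A : ι → Module.End ℂ V} {h : V}

lemma IsSlice.exists_expProd_ne_zero (hs : IsSlice T A h) {P Q : V → ℂ} (hP : IsPolyFun P)
    (hQ : IsPolyFun Q) {x : V} (hx : P x ≠ 0) (hh : Q h ≠ 0) :
    ∃ y ∈ T, Q y ≠ 0 ∧ ∃ c, P (expProd A c y) ≠ 0 := by
  let _ := coordNormedAddCommGroup V
  let _ := coordNormedSpace V
  by_contra! hcon
  have hQnhds : {y | Q y ≠ 0} ∈ 𝓝 h := hQ.differentiable.continuous.continuousAt.eventually_ne hh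
  refine hx (congrFun (hP.eq_zero_of_eventuallyEq_zero (x := h) ?_) x)
  filter_upwards [hs.eventually_exists_expProd_eq hQnhds] with x ⟨y, hyT, hy, c, hc⟩
  rw [← hc, hcon y hyT hy c]

/-- Near `x` every element is of the form `expProd A c y` with `y` in the slice, and the set
where `P` does not vanish is connected. -/
lemma rel_of_forall_isSlice {P : V → ℂ} (hP : IsPolyFun P) {r : V → V → Prop}
    (hsymm : ∀ x y, r x y → r y x) (htrans : ∀ x y z, r x y → r y z → r x z)
    (hslice : ∀ x, P x ≠ 0 → ∃ (ι : Type*) (_ : Fintype ι) (T : Submodule ℂ V)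
      (A : ι → Module.End ℂ V), IsSlice T A x ∧ ∀ y ∈ T, P y ≠ 0 → ∀ c, r x (expProd A c y))
    {x y : V} (hx : P x ≠ 0) (hy : P y ≠ 0) : r x y := by
  let _ := coordNormedAddCommGroup V
  let _ := coordNormedSpace V
  refine hP.isPreconnected_setOf_ne_zero.induction₂ r (fun x hx => ?_)
    (fun x y z _ _ _ => htrans x y z) (fun x y _ _ => hsymm x y) hx hy
  obtain ⟨ι, _, T, A, hs, hr⟩ := hslice x hx
  filter_upwards [nhdsWithin_le_nhds (hs.eventually_exists_expProd_eq
    (hP.differentiable.continuous.continuousAt.eventually_ne hx))]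
  rintro _ ⟨y, hy, hyP, c, rfl⟩
  exact hr y hy hyP c

lemma isPolyFun_of_forall_isSlice {P k f F : V → ℂ} (hP : IsPolyFun P) (hk : HasPolyGrowth k)
    (hf : IsPolyFun f) (hF : ∀ x, F x = P x ^ 2 * k x)
    (hslice : ∀ x, P x ≠ 0 →
      ∃ u : V ≃ₗ[ℂ] V, P (u x) ≠ 0 ∧ (∀ z, F (u z) = F z) ∧ IsSlice T A (u x))
    (hFf : ∀ y ∈ T, P y ≠ 0 → ∀ c, F (expProd A c y) = f y) : IsPolyFun F := by
  let _ := coordNormedAddCommGroup V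
  let _ := coordNormedSpace V
  have hPd := hP.differentiable
  have hgrowth : HasPolyGrowth F := by
    simpa only [funext hF] using (hP.pow 2).hasPolyGrowth.mul hk
  refine isPolyFun_of_hasPolyGrowth (fun x => ?_) hgrowth
  by_cases hx : P x = 0
  · rw [funext hF]
    exact differentiableAt_sq_mul_of_isBigO_one (hPd x) hx (hk.isBigO_one_nhds x)
  · obtain ⟨u, hux, huF, hs⟩ := hslice x hx
    have hdiff : DifferentiableAt ℂ F (u x) :=
      hs.differentiableAt (hPd.continuous.continuousAt.eventually_ne hux) (hf.differentiable _) hFf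
    rw [← funext huF]
    exact hdiff.comp x u.toContinuousLinearEquiv.differentiableAt

end CoordNorm

section RootVectors

open LieAlgebra LieAlgebra.IsKilling LieModule

variable {g : Type*} [LieRing g] [LieAlgebra ℂ g] [FiniteDimensional ℂ g] [IsKilling ℂ g]

/-- A choice, for every root `i` of the Cartan subalgebra `t`, of root vectors `e i` and `f i` of
weights `i` and `-i` forming an `sl₂`-triple with the coroot of `i`. Nothing relates the choices
made for different roots. -/
structure RootVectors (t : LieSubalgebra ℂ g) [t.IsCartanSubalgebra] where
  e : t.root → g
  f : t.root → g
  isSl2Triple (i : t.root) : IsSl2Triple ((rootSystem t).coroot i : g) (e i) (f i)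
  e_mem (i : t.root) : e i ∈ rootSpace t (i.1 : t → ℂ)
  f_mem (i : t.root) : f i ∈ rootSpace t (-i.1 : t → ℂ)

variable {t : LieSubalgebra ℂ g} [t.IsCartanSubalgebra]

instance : Nonempty (RootVectors t) := by
  choose h e f hs he hf using fun i : t.root =>
    exists_isSl2Triple_of_weight_isNonZero (LieSubalgebra.isNonZero_coe_root i)
  refine ⟨⟨e, f, fun i => ?_, he, hf⟩⟩
  rw [rootSystem_coroot_apply,
    ← (hs i).h_eq_coroot (LieSubalgebra.isNonZero_coe_root i) (he i) (hf i)]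
  exact hs i

lemma lie_eq_zero_of_mem_cartan {x y : g} (hx : x ∈ t) (hy : y ∈ t) : ⁅x, y⁆ = 0 :=
  congrArg Subtype.val (LieModule.IsTrivial.trivial (⟨x, hx⟩ : t) (⟨y, hy⟩ : t))

lemma exists_root_eq_neg (i : t.root) :
    ∃ j : t.root, (rootSystem t).root j = -(rootSystem t).root i :=
  ⟨(rootSystem t).reflectionPerm i i, by
    rw [RootPairing.root_reflectionPerm, RootPairing.reflection_apply_self]⟩

lemma eq_or_root_eq_neg_of_root_eq_smul {i j : t.root} {c : ℂ}
    (h : (rootSystem t).root j = c • (rootSystem t).root i) :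
    j = i ∨ (rootSystem t).root j = -(rootSystem t).root i := by
  rcases eq_neg_or_eq_of_eq_smul i.1 j.1 (LieSubalgebra.isNonZero_coe_root j) c
    (funext fun x => LinearMap.congr_fun h x) with h | h
  · exact .inr (LinearMap.ext fun x => by simp [h])
  · exact .inl (Subtype.ext h)

lemma root_coroot_self (i : t.root) : (rootSystem t).root i ((rootSystem t).coroot i) = 2 :=
  (rootSystem t).root_coroot_two i

lemma exists_forall_root_ne_zero (t : LieSubalgebra ℂ g) [t.IsCartanSubalgebra] :
    ∃ h : t, ∀ i, (rootSystem t).root i h ≠ 0 :=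
  Module.Dual.exists_forall_ne_zero_of_forall_exists (rootSystem t).root fun i =>
    ⟨(rootSystem t).coroot i, by rw [root_coroot_self]; exact two_ne_zero⟩

namespace RootVectors

variable (R : RootVectors t)

lemma lie_e (h : t) (i : t.root) : ⁅(h : g), R.e i⁆ = (rootSystem t).root i h • R.e i :=
  lie_eq_smul_of_mem_rootSpace (R.e_mem i) h

lemma lie_f (h : t) (i : t.root) : ⁅(h : g), R.f i⁆ = -(rootSystem t).root i h • R.f i :=
  lie_eq_smul_of_mem_rootSpace (R.f_mem i) h

lemma e_ne_zero (i : t.root) : R.e i ≠ 0 :=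
  (R.isSl2Triple i).e_ne_zero

lemma isNilpotent_ad_e (i : t.root) : IsNilpotent (ad ℂ g (R.e i)) :=
  isNilpotent_ad_of_mem_rootSpace t (LieSubalgebra.isNonZero_coe_root i) (R.e_mem i)

lemma isNilpotent_ad_f (i : t.root) : IsNilpotent (ad ℂ g (R.f i)) :=
  isNilpotent_ad_of_mem_rootSpace t (neg_ne_zero.2 (LieSubalgebra.isNonZero_coe_root i)) (R.f_mem i)

lemma exists_smul_e_eq {i : t.root} {x : g} (hx : x ∈ rootSpace t (i.1 : t → ℂ)) :
    ∃ c : ℂ, c • R.e i = x := by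
  obtain ⟨c, hc⟩ := (finrank_eq_one_iff_of_nonzero' (⟨R.e i, R.e_mem i⟩ : rootSpace t i.1)
    fun h => R.e_ne_zero i (congrArg Subtype.val h)).1
    (finrank_rootSpace_eq_one i.1 (LieSubalgebra.isNonZero_coe_root i)) ⟨x, hx⟩
  exact ⟨c, congrArg Subtype.val hc⟩

lemma linearIndependent_e : LinearIndependent ℂ R.e := by
  have h := iSupIndep_genWeightSpace' ℂ t g
  rw [← LieSubmodule.iSupIndep_toSubmodule] at h
  exact (h.comp Subtype.val_injective).linearIndependent _ R.e_mem R.e_ne_zero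

lemma cartan_disjoint_span_e : Disjoint t.toSubmodule (.span ℂ (Set.range R.e)) := by
  refine Submodule.disjoint_def.2 fun x hx hxe => ?_
  obtain ⟨c, rfl⟩ := (Submodule.mem_span_range_iff_exists_fun ℂ).1 hxe
  suffices c = 0 by simp [this]
  ext j
  have h := lie_eq_zero_of_mem_cartan (Subtype.coe_prop ((rootSystem t).coroot j)) hx
  simp only [lie_sum, lie_smul, R.lie_e, smul_smul] at h
  have h2 := Fintype.linearIndependent_iff.1 R.linearIndependent_e _ h j
  rw [root_coroot_self] at h2
  simpa using h2

lemma cartan_sup_span_e : t.toSubmodule ⊔ .span ℂ (Set.range R.e) = ⊤ := by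
  rw [← LieSubmodule.top_toSubmodule (R := ℂ) (L := t) (M := g),
    ← cartan_sup_iSup_rootSpace_eq_top (K := ℂ) (L := g) (H := t),
    LieSubmodule.sup_toSubmodule]
  refine le_antisymm (sup_le_sup le_rfl ?_) (sup_le_sup le_rfl ?_)
  · rw [Submodule.span_le]
    rintro _ ⟨i, rfl⟩
    exact (le_iSup₂_of_le i.1 (LieSubalgebra.isNonZero_coe_root i) le_rfl :
      rootSpace t i.1 ≤ _) (R.e_mem i)
  · simp only [LieSubmodule.iSup_toSubmodule]
    refine iSup₂_le fun a ha x hx => ?_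
    obtain ⟨c, rfl⟩ := R.exists_smul_e_eq (i := ⟨a, by simpa using ha⟩) hx
    exact Submodule.smul_mem _ _ (Submodule.subset_span ⟨_, rfl⟩)

/-- The root space decomposition `(h, c) ↦ h + ∑ i, c i • e i`. -/
def decomp : (t × (t.root → ℂ)) ≃ₗ[ℂ] g :=
  .ofBijective (t.toSubmodule.subtype.coprod (Fintype.linearCombination ℂ R.e)) <| by
    have hinj : Function.Injective (Fintype.linearCombination ℂ R.e) :=
      R.linearIndependent_e.fintypeLinearCombination_injective
    constructor
    · rw [← LinearMap.ker_eq_bot, LinearMap.ker_coprod_of_disjoint_range, Submodule.ker_subtype,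
        LinearMap.ker_eq_bot.2 hinj, Submodule.prod_bot]
      rw [Submodule.range_subtype, Fintype.range_linearCombination]
      exact R.cartan_disjoint_span_e
    · rw [← LinearMap.range_eq_top, LinearMap.range_coprod, Submodule.range_subtype,
        Fintype.range_linearCombination, cartan_sup_span_e]

lemma decomp_apply (p : t × (t.root → ℂ)) : R.decomp p = (p.1 : g) + ∑ i, p.2 i • R.e i := rfl

lemma decomp_coe (h : t) : R.decomp (h, 0) = h := by
  simp [decomp_apply]

/-- The projection onto the Cartan subalgebra along the root spaces. -/
def proj : g →ₗ[ℂ] t :=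
  LinearMap.fst ℂ t (t.root → ℂ) ∘ₗ R.decomp.symm

lemma proj_coe (h : t) : R.proj h = h := by
  rw [← R.decomp_coe h]
  simp [proj]

lemma proj_e (i : t.root) : R.proj (R.e i) = 0 := by
  classical
  have he : R.e i = R.decomp (0, Pi.single i 1) := by simp [decomp_apply, Pi.single_apply]
  simp [proj, he]

lemma e_notMem_cartan (i : t.root) : R.e i ∉ t := fun h =>
  R.e_ne_zero i (Submodule.disjoint_def.1 R.cartan_disjoint_span_e _ h
    (Submodule.subset_span (Set.mem_range_self i)))

lemma linearMap_ext {M : Type*} [AddCommGroup M] [Module ℂ M] {F G : g →ₗ[ℂ] M}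
    (ht : ∀ h : t, F h = G h) (he : ∀ i, F (R.e i) = G (R.e i)) : F = G := by
  ext x
  obtain ⟨p, rfl⟩ := R.decomp.surjective x
  simp only [decomp_apply, map_add, map_sum, map_smul, ht, he]

lemma lie_decomp (h : t) (p : t × (t.root → ℂ)) :
    ⁅(h : g), R.decomp p⁆ = R.decomp (0, fun i => p.2 i * (rootSystem t).root i h) := by
  simp only [decomp_apply, lie_add, lie_sum, lie_smul, lie_e, smul_smul, ZeroMemClass.coe_zero,
    lie_eq_zero_of_mem_cartan h.2 p.1.2]

lemma ad_pow_decomp (h : t) (c : t.root → ℂ) (n : ℕ) :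
    (ad ℂ g (h : g) ^ n) (R.decomp (0, c)) =
      R.decomp (0, fun i => c i * (rootSystem t).root i h ^ n) := by
  induction n with
  | zero => simp
  | succ n ih =>
    rw [pow_succ', Module.End.mul_apply, ih, ad_apply, lie_decomp]
    simp only [mul_assoc, ← pow_succ]

lemma exists_lie_e_e_eq {i j : t.root} (hij : (rootSystem t).root j = -(rootSystem t).root i) :
    ∃ k : t, ⁅R.e i, R.e j⁆ = k ∧ (rootSystem t).root i k ≠ 0 := by
  have hj : (j.1 : t → ℂ) = -i.1 := funext fun x => LinearMap.congr_fun hij x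
  have hlie := lie_eq_killingForm_smul_of_mem_rootSpace_of_mem_rootSpace_neg (R.e_mem i)
    (hj ▸ R.e_mem j)
  refine ⟨killingForm ℂ g (R.e i) (R.e j) •
    (cartanEquivDual t).symm ((rootSystem t).root i), hlie, ?_⟩
  rw [map_smul]
  refine mul_ne_zero (fun h0 => ?_) (root_apply_cartanEquivDual_symm_ne_zero
    (LieSubalgebra.isNonZero_coe_root i))
  obtain ⟨c, hc⟩ := R.exists_smul_e_eq (i := j) (hj ▸ R.f_mem i)
  apply (R.isSl2Triple i).h_ne_zero
  rw [← (R.isSl2Triple i).lie_e_f, ← hc, lie_smul, hlie, h0, zero_smul, smul_zero]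

end RootVectors

end RootVectors

section Regular

open LieAlgebra LieSubalgebra Module

variable {g : Type*} [LieRing g] [LieAlgebra ℂ g] [FiniteDimensional ℂ g]

/-- The lowest coefficient of the characteristic polynomial of `ad x` which does not vanish
identically in `x`. As a polynomial function of `x` it cuts out the complement of the regular
elements. -/
def disc (x : g) : ℂ :=
  (ad ℂ g x).charpoly.coeff (rank ℂ g)

lemma disc_ne_zero {x : g} : disc x ≠ 0 ↔ IsRegular ℂ x := Iff.rfl

lemma isPolyFun_disc : IsPolyFun (disc : g → ℂ) :=
  .coeff_charpoly (ad ℂ g : g →ₗ[ℂ] Module.End ℂ g) _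

variable {a : g ≃ₗ[ℂ] g}

lemma disc_apply_of_mem_lieAut (ha : a ∈ lieAut g) (x : g) : disc (a x) = disc x := by
  rw [disc, ad_apply_of_mem_lieAut ha, LinearEquiv.charpoly_conj, disc]

lemma isRegular_apply_iff (ha : a ∈ lieAut g) {x : g} : IsRegular ℂ (a x) ↔ IsRegular ℂ x := by
  rw [← disc_ne_zero, disc_apply_of_mem_lieAut ha, disc_ne_zero]

omit [FiniteDimensional ℂ g] in
lemma apply_mem_engel_apply_iff (ha : a ∈ lieAut g) {x z : g} :
    a z ∈ engel ℂ (a x) ↔ z ∈ engel ℂ x := by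
  simp only [mem_engel_iff, ad_apply_of_mem_lieAut ha]
  refine exists_congr fun n => ?_
  rw [show a.conj (ad ℂ g x) ^ n = a.conj (ad ℂ g x ^ n) from
    (map_pow (LinearEquiv.conjAlgEquiv ℂ a) _ n).symm, LinearEquiv.conj_apply_apply,
    a.symm_apply_apply, map_eq_zero_iff _ a.injective]

lemma isCartanSubalgebra_engel_of_isRegular {x : g} (hx : IsRegular ℂ x) :
    (engel ℂ x).IsCartanSubalgebra := by
  have hcard : (finrank ℂ g : Cardinal) ≤ Cardinal.mk ℂ :=
    Cardinal.natCast_le_aleph0.trans <| Cardinal.infinite_iff.1 inferInstance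
  refine ⟨isNilpotent_of_forall_le_engel _ fun y hy => ?_, normalizer_engel _ _⟩
  refine engel_isBot_of_isMin hcard (engel ℂ x) ⟨_, x, self_mem_engel _ _, rfl⟩ le_rfl ?_
    ⟨_, y, hy, rfl⟩
  rintro ⟨_, z, _, rfl⟩ hz
  have hrank : finrank ℂ (engel ℂ x) ≤ finrank ℂ (engel ℂ z) :=
    ((isRegular_iff_finrank_engel_eq_rank ℂ x).1 hx).trans_le (rank_le_finrank_engel ℂ z)
  exact (toSubmodule_injective (Submodule.eq_of_le_of_finrank_le hz hrank)).ge

end Regular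

section RegularCartan

open LieAlgebra LieAlgebra.IsKilling LieSubalgebra Module

variable {g : Type*} [LieRing g] [LieAlgebra ℂ g] [FiniteDimensional ℂ g] [IsKilling ℂ g]
  {t : LieSubalgebra ℂ g} [t.IsCartanSubalgebra]

lemma cartan_le_engel {h : g} (hh : h ∈ t) : t ≤ engel ℂ h := fun y hy =>
  (mem_engel_iff ..).2 ⟨1, by rw [pow_one, ad_apply, lie_eq_zero_of_mem_cartan hh hy]⟩

namespace RootVectors

variable (R : RootVectors t)

include R in
lemma engel_eq_of_forall_root_ne_zero {h : t} (hh : ∀ i, (rootSystem t).root i h ≠ 0) :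
    engel ℂ (h : g) = t := by
  refine le_antisymm (fun y hy => ?_) (cartan_le_engel h.2)
  obtain ⟨n, hn⟩ := (mem_engel_iff ..).1 hy
  obtain ⟨⟨k, c⟩, rfl⟩ := R.decomp.surjective y
  have hpow : (ad ℂ g (h : g) ^ n) ⁅(h : g), R.decomp (k, c)⁆ = 0 := by
    rw [← ad_apply ℂ, ← Module.End.mul_apply, ← pow_succ, pow_succ', Module.End.mul_apply, hn,
      map_zero]
  rw [lie_decomp, ad_pow_decomp, map_eq_zero_iff _ R.decomp.injective] at hpow
  have hc : c = 0 := funext fun i => by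
    have hi := congrFun (congrArg Prod.snd hpow) i
    exact (mul_eq_zero.1 ((mul_eq_zero.1 hi).resolve_right (pow_ne_zero _ (hh i)))).resolve_right
      (hh i)
  rw [hc, R.decomp_coe]
  exact k.2

lemma isSlice {h : t} (hh : ∀ i, (rootSystem t).root i h ≠ 0) :
    IsSlice t.toSubmodule (fun i => ad ℂ g (R.e i)) (h : g) := by
  refine ⟨h.2, ?_⟩
  let E : (t × (t.root → ℂ)) ≃ (t × (t.root → ℂ)) := (Equiv.refl t).prodCongr <|
    Equiv.piCongrRight fun i => Equiv.mulRight₀ (-(rootSystem t).root i h) (neg_ne_zero.2 (hh i))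
  suffices hE : (fun p : t × (t.root → ℂ) => (p.1 : g) + ∑ i, p.2 i • ad ℂ g (R.e i) h) =
      R.decomp ∘ E from hE ▸ R.decomp.bijective.comp E.bijective
  funext p
  simp only [Function.comp_apply, decomp_apply]
  refine congrArg _ (Finset.sum_congr rfl fun i _ => ?_)
  rw [ad_apply, ← lie_skew, R.lie_e, ← neg_smul, smul_smul]
  rfl

lemma exists_mem_adjointGroup_coe_eq_expProd (c : t.root → ℂ) :
    ∃ u ∈ adjointGroup g, (u : g →ₗ[ℂ] g) = expProd (fun i => ad ℂ g (R.e i)) c := by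
  rw [expProd]
  induction (Finset.univ : Finset t.root).toList with
  | nil => exact ⟨1, one_mem _, rfl⟩
  | cons i l ih =>
    have hnil : IsNilpotent (ad ℂ g (c i • R.e i)) := by
      rw [map_smul]
      exact (R.isNilpotent_ad_e i).smul _
    obtain ⟨u, hu, hu'⟩ := exists_mem_adjointGroup_coe_eq_endExp hnil
    obtain ⟨v, hv, hv'⟩ := ih
    refine ⟨u * v, mul_mem hu hv, ?_⟩
    rw [List.map_cons, List.prod_cons, ← hv', ← map_smul, ← hu']
    rfl

end RootVectors

variable (t) in
lemma finrank_cartan_eq_rank : finrank ℂ t = rank ℂ g := by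
  obtain ⟨R⟩ := (inferInstance : Nonempty (RootVectors t))
  obtain ⟨h, hh⟩ := exists_forall_root_ne_zero t
  obtain ⟨x, hx⟩ := exists_isRegular ℂ g
  obtain ⟨y, hy, hroot, c, hc⟩ := (R.isSlice hh).exists_expProd_ne_zero isPolyFun_disc
    (IsPolyFun.prod fun i _ => .linear ((rootSystem t).root i ∘ₗ R.proj)) hx
    (Finset.prod_ne_zero_iff.2 fun i _ => by
      simpa only [LinearMap.comp_apply, R.proj_coe] using hh i)
  obtain ⟨u, hu, hu'⟩ := R.exists_mem_adjointGroup_coe_eq_expProd c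
  rw [← hu', LinearEquiv.coe_coe, disc_ne_zero, isRegular_apply_iff (adjointGroup_le_lieAut hu),
    isRegular_iff_finrank_engel_eq_rank] at hc
  lift y to t using hy
  simp only [LinearMap.comp_apply, R.proj_coe, Finset.prod_ne_zero_iff] at hroot
  rw [← hc, R.engel_eq_of_forall_root_ne_zero fun i => hroot i (Finset.mem_univ i)]

lemma isRegular_coe_iff {h : t} : IsRegular ℂ (h : g) ↔ ∀ i, (rootSystem t).root i h ≠ 0 := by
  obtain ⟨R⟩ := (inferInstance : Nonempty (RootVectors t))
  rw [isRegular_iff_finrank_engel_eq_rank, ← finrank_cartan_eq_rank t]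
  refine ⟨fun hfin i hi => ?_, fun hh => by rw [R.engel_eq_of_forall_root_ne_zero hh]⟩
  have ht : t = engel ℂ (h : g) := toSubmodule_injective
    (Submodule.eq_of_le_of_finrank_eq (cartan_le_engel h.2) hfin.symm)
  refine R.e_notMem_cartan i (ht.ge ((mem_engel_iff ..).2 ⟨1, ?_⟩))
  rw [pow_one, ad_apply, R.lie_e, hi, zero_smul]

lemma engel_eq_of_isRegular {h : g} (hh : h ∈ t) (hr : IsRegular ℂ h) : engel ℂ h = t := by
  obtain ⟨R⟩ := (inferInstance : Nonempty (RootVectors t))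
  exact R.engel_eq_of_forall_root_ne_zero (h := ⟨h, hh⟩) (isRegular_coe_iff.1 hr)

lemma exists_mem_adjointGroup_engel {x y : g} (hx : IsRegular ℂ x) (hy : IsRegular ℂ y) :
    ∃ u ∈ adjointGroup g, ∀ z, u z ∈ engel ℂ y ↔ z ∈ engel ℂ x := by
  refine rel_of_forall_isSlice isPolyFun_disc
    (r := fun x y => ∃ u ∈ adjointGroup g, ∀ z, u z ∈ engel ℂ y ↔ z ∈ engel ℂ x)
    ?_ ?_ (fun x hx => ?_) hx hy
  · rintro x y ⟨u, hu, hxy⟩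
    exact ⟨u⁻¹, inv_mem hu, fun z => by
      rw [← hxy, LinearEquiv.coe_inv, LinearEquiv.apply_symm_apply]⟩
  · rintro x y z ⟨u, hu, hxy⟩ ⟨v, hv, hyz⟩
    exact ⟨v * u, mul_mem hv hu, fun w => (hyz (u w)).trans (hxy w)⟩
  · have := isCartanSubalgebra_engel_of_isRegular hx
    obtain ⟨R⟩ := (inferInstance : Nonempty (RootVectors (engel ℂ x)))
    refine ⟨_, _, _, _, R.isSlice (h := ⟨x, self_mem_engel ℂ x⟩) (isRegular_coe_iff.1 hx), ?_⟩
    intro y hy hyr c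
    obtain ⟨u, hu, hu'⟩ := R.exists_mem_adjointGroup_coe_eq_expProd c
    refine ⟨u, hu, fun z => ?_⟩
    rw [← hu', LinearEquiv.coe_coe, apply_mem_engel_apply_iff (adjointGroup_le_lieAut hu),
      engel_eq_of_isRegular hy hyr]

variable (t) in
lemma exists_mem_adjointGroup_apply_mem_cartan {x : g} (hx : IsRegular ℂ x) :
    ∃ u ∈ adjointGroup g, u x ∈ t := by
  obtain ⟨h, hh⟩ := exists_forall_root_ne_zero t
  obtain ⟨u, hu, hxh⟩ := exists_mem_adjointGroup_engel hx (isRegular_coe_iff.2 hh)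
  rw [engel_eq_of_isRegular h.2 (isRegular_coe_iff.2 hh)] at hxh
  exact ⟨u, hu, (hxh x).2 (self_mem_engel ℂ x)⟩

end RegularCartan

section SlTwo

open LieAlgebra

lemma endExp_apply_of_pow_apply_eq_zero {V : Type*} [AddCommGroup V] [Module ℂ V]
    [FiniteDimensional ℂ V] {A : Module.End ℂ V} (hA : IsNilpotent A) {v : V} {n : ℕ}
    (hv : (A ^ n) v = 0) :
    endExp A v = ∑ k ∈ Finset.range n, (k.factorial : ℂ)⁻¹ • (A ^ k) v := by
  have hpow : ∀ k ≥ n, (k.factorial : ℂ)⁻¹ • (A ^ k) v = 0 := fun k hk => by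
    rw [← Nat.sub_add_cancel hk, pow_add, Module.End.mul_apply, hv, map_zero, smul_zero]
  have hA' : ∀ k ≥ Module.finrank ℂ V + 1, (k.factorial : ℂ)⁻¹ • (A ^ k) v = 0 := fun k hk => by
    rw [pow_eq_zero_of_le ((Nat.le_succ _).trans hk) (pow_finrank_eq_zero_of_isNilpotent hA),
      LinearMap.zero_apply, smul_zero]
  rw [endExp, LinearMap.sum_apply, ← Finset.eventually_constant_sum hpow (Nat.le_add_left n _),
    Finset.eventually_constant_sum hA' (Nat.le_add_right _ n)]
  rfl

variable {g : Type*} [LieRing g] [LieAlgebra ℂ g] [FiniteDimensional ℂ g]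

/-- Up to sign this is `exp (ad e) exp (ad (-f)) exp (ad e)`, the image in the adjoint group of the
Weyl element `!![0, 1; -1, 0]` of `SL₂`. -/
lemma endExp_ad_e_f_e_apply {h e f x : g} (hs : IsSl2Triple h e f) (he : IsNilpotent (ad ℂ g e))
    (hf : IsNilpotent (ad ℂ g f)) {a : ℂ} (hxe : ⁅x, e⁆ = a • e) (hxf : ⁅x, f⁆ = -a • f) :
    endExp (ad ℂ g e) (endExp (ad ℂ g (-f)) (endExp (ad ℂ g e) x)) = x - a • h := by
  have hhe : ⁅h, e⁆ = (2 : ℂ) • e := by rw [hs.lie_h_e_nsmul, two_smul, two_smul]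
  have hhf : ⁅h, f⁆ = (-2 : ℂ) • f := by rw [hs.lie_h_f_nsmul, neg_smul, two_smul, two_smul]
  have hf' : IsNilpotent (ad ℂ g (-f)) := by rw [map_neg]; exact hf.neg
  have hE {y : g} {b : ℂ} (hy : ⁅y, e⁆ = b • e) : endExp (ad ℂ g e) y = y - b • e := by
    have hey : ⁅e, y⁆ = -(b • e) := by rw [← lie_skew, hy]
    rw [endExp_apply_of_pow_apply_eq_zero he (n := 2) (by simp [pow_succ, hey])]
    simp [Finset.sum_range_succ, hey, sub_eq_add_neg]
  have hF {y : g} {b : ℂ} (hy : ⁅y, f⁆ = b • f) : endExp (ad ℂ g (-f)) y = y + b • f := by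
    have hfy : ⁅f, y⁆ = -(b • f) := by rw [← lie_skew, hy]
    rw [endExp_apply_of_pow_apply_eq_zero hf' (n := 2) (by simp [pow_succ, hfy])]
    simp [Finset.sum_range_succ, hfy]
  have hFe : endExp (ad ℂ g (-f)) e = e + h - f := by
    have hfe : ⁅f, e⁆ = -h := by rw [← lie_skew, hs.lie_e_f]
    have hfh : ⁅f, h⁆ = (2 : ℂ) • f := by rw [← lie_skew, hhf, neg_smul, neg_neg]
    rw [endExp_apply_of_pow_apply_eq_zero hf' (n := 3) (by simp [pow_succ, hfe, hfh])]
    simp [Finset.sum_range_succ, pow_succ, hfe, hfh, sub_eq_add_neg]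
  rw [hE hxe, map_sub, map_smul, hF hxf, hFe]
  have hEe : endExp (ad ℂ g e) e = e := by simpa using hE (y := e) (b := 0) (by simp)
  simp only [map_sub, map_add, map_smul, hE hxe, hE hhe, hEe]
  module

lemma commute_of_coe_eq_endExp_ad {x : g} {τ u : g ≃ₗ[ℂ] g}
    (hu : (u : g →ₗ[ℂ] g) = endExp (ad ℂ g x)) (hτ : τ ∈ lieAut g) (hx : τ x = x) :
    Commute τ u := by
  have hconj : τ.conj (u : g →ₗ[ℂ] g) = u := by
    rw [hu, ← endExp_conj, ← ad_apply_of_mem_lieAut hτ, hx]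
  refine LinearEquiv.ext fun y => ?_
  simpa [LinearEquiv.conj_apply_apply] using LinearMap.congr_fun hconj (τ y)

end SlTwo

section Torus

open LieAlgebra LieAlgebra.IsKilling LieModule

variable {g : Type*} [LieRing g] [LieAlgebra ℂ g] [FiniteDimensional ℂ g] [IsKilling ℂ g]
  {t : LieSubalgebra ℂ g} [t.IsCartanSubalgebra]

lemma linearMap_ext_of_lie_eq_smul {M : Type*} [AddCommGroup M] [Module ℂ M] {F G : g →ₗ[ℂ] M}
    (h : t) (hFG : ∀ z (b : ℂ), ⁅(h : g), z⁆ = b • z → F z = G z) : F = G := by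
  obtain ⟨R⟩ := (inferInstance : Nonempty (RootVectors t))
  exact R.linearMap_ext
    (fun h' => hFG h' 0 (by rw [zero_smul, lie_eq_zero_of_mem_cartan h.2 h'.2]))
    fun i => hFG _ _ (R.lie_e h i)

namespace RootVectors

variable (R : RootVectors t)

/-- The automorphism `exp (ad h)` of `g`, for `h` in the Cartan subalgebra: it is the identity on
the Cartan subalgebra and multiplies `e i` by `exp (root i h)`. -/
def torusExp (h : t) : g ≃ₗ[ℂ] g :=
  R.decomp.symm ≪≫ₗ ((LinearEquiv.refl ℂ t).prodCongr
    (LinearEquiv.piCongrRight fun i => LinearEquiv.smulOfNeZero ℂ ℂ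
      (Complex.exp ((rootSystem t).root i h)) (Complex.exp_ne_zero _))) ≪≫ₗ R.decomp

lemma torusExp_coe (h h' : t) : R.torusExp h h' = h' := by
  rw [torusExp, ← R.decomp_coe h']
  simp

lemma torusExp_e (h : t) (i : t.root) :
    R.torusExp h (R.e i) = Complex.exp ((rootSystem t).root i h) • R.e i := by
  classical
  have hi : R.decomp (0, Pi.single i 1) = R.e i := by
    simp [decomp_apply, Pi.single_apply]
  rw [torusExp, ← hi, ← map_smul]
  simp only [LinearEquiv.trans_apply, LinearEquiv.symm_apply_apply]
  congr 1
  ext j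
  · simp
  · by_cases hj : j = i
    · subst hj; simp
    · simp [hj]

lemma torusExp_apply_of_lie_eq_smul {h : t} {z : g} {b : ℂ} (hz : ⁅(h : g), z⁆ = b • z) :
    R.torusExp h z = Complex.exp b • z := by
  obtain ⟨p, rfl⟩ := R.decomp.surjective z
  rw [R.lie_decomp, ← map_smul] at hz
  obtain ⟨h₁, h₂⟩ := Prod.ext_iff.1 (R.decomp.injective hz)
  have hb : Complex.exp b • p.1 = p.1 := by
    rcases smul_eq_zero.1 h₁.symm with hb | hp
    · rw [hb, Complex.exp_zero, one_smul]
    · rw [hp, smul_zero]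
  have hc (i) : Complex.exp ((rootSystem t).root i h) * p.2 i = Complex.exp b * p.2 i := by
    rcases eq_or_ne (p.2 i) 0 with hi | hi
    · rw [hi, mul_zero, mul_zero]
    · rw [mul_left_cancel₀ hi ((congrFun h₂ i).trans (mul_comm b _))]
  simp only [decomp_apply, map_add, map_sum, map_smul, torusExp_coe, torusExp_e, smul_add,
    Finset.smul_sum, smul_smul, ← hc]
  rw [← Submodule.coe_smul, hb]
  simp only [mul_comm]

lemma torusExp_mem_lieAut (h : t) : R.torusExp h ∈ lieAut g := by
  let T : Module.End ℂ g := R.torusExp h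
  have had : LinearMap.mulLeft ℂ T ∘ₗ (ad ℂ g : g →ₗ[ℂ] Module.End ℂ g) =
      LinearMap.mulRight ℂ T ∘ₗ (ad ℂ g : g →ₗ[ℂ] Module.End ℂ g) ∘ₗ T := by
    refine linearMap_ext_of_lie_eq_smul h fun x a hx =>
      linearMap_ext_of_lie_eq_smul h fun y b hy => ?_
    have hxy : ⁅(h : g), ⁅x, y⁆⁆ = (a + b) • ⁅x, y⁆ := by
      rw [leibniz_lie, hx, hy, smul_lie, lie_smul, add_smul]
    change R.torusExp h ⁅x, y⁆ = ⁅R.torusExp h x, R.torusExp h y⁆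
    rw [R.torusExp_apply_of_lie_eq_smul hx, R.torusExp_apply_of_lie_eq_smul hy,
      R.torusExp_apply_of_lie_eq_smul hxy, Complex.exp_add, smul_lie, lie_smul, smul_smul]
  exact fun x y => LinearMap.congr_fun (LinearMap.congr_fun had x) y

lemma torusExp_add (h h' : t) : R.torusExp (h + h') = R.torusExp h * R.torusExp h' := by
  refine LinearEquiv.toLinearMap_injective (R.linearMap_ext (fun k => ?_) fun i => ?_)
  · simp [torusExp_coe]
  · simp [torusExp_e, smul_smul, Complex.exp_add, mul_comm]

lemma torusExp_zero : R.torusExp 0 = 1 := by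
  simpa using R.torusExp_add 0 0

lemma torusExp_neg (h : t) : R.torusExp (-h) = (R.torusExp h)⁻¹ := by
  rw [eq_inv_iff_mul_eq_one, ← torusExp_add, neg_add_cancel, torusExp_zero]

lemma mul_torusExp_mul_inv {σ : g ≃ₗ[ℂ] g} (hσ : σ ∈ lieAut g) {h h' : t} (hh : σ h = h') :
    σ * R.torusExp h * σ⁻¹ = R.torusExp h' := by
  rw [mul_inv_eq_iff_eq_mul]
  refine LinearEquiv.toLinearMap_injective (linearMap_ext_of_lie_eq_smul h fun z b hz => ?_)
  have hσz : ⁅(h' : g), σ z⁆ = b • σ z := by rw [← hh, ← hσ, hz, map_smul]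
  simp [R.torusExp_apply_of_lie_eq_smul hz, R.torusExp_apply_of_lie_eq_smul hσz]

lemma exists_coreflection (i : t.root) :
    ∃ θ ∈ adjointGroup g, (∀ h : t, θ h = (rootSystem t).coreflection i h) ∧
      ∀ τ ∈ lieAut g, τ (R.e i) = R.e i → τ (R.f i) = R.f i → Commute τ θ := by
  obtain ⟨u, hu, hue⟩ := exists_mem_adjointGroup_coe_eq_endExp (R.isNilpotent_ad_e i)
  obtain ⟨v, hv, hvf⟩ := exists_mem_adjointGroup_coe_eq_endExp (x := -R.f i)
    (by rw [map_neg]; exact (R.isNilpotent_ad_f i).neg)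
  refine ⟨u * v * u, mul_mem (mul_mem hu hv) hu, fun h => ?_, fun τ hτ he hf => ?_⟩
  · have h' := endExp_ad_e_f_e_apply (R.isSl2Triple i) (R.isNilpotent_ad_e i)
      (R.isNilpotent_ad_f i) (R.lie_e h i) (R.lie_f h i)
    rwa [← hue, ← hvf] at h'
  · have hτu := commute_of_coe_eq_endExp_ad hue hτ he
    have hτv := commute_of_coe_eq_endExp_ad hvf hτ (by rw [map_neg, hf])
    exact (hτu.mul_right hτv).mul_right hτu

/-- `torusExp (c • coroot i)` is the commutator of `torusExp ((c / 2) • coroot i)` and an element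
acting on the Cartan subalgebra as the reflection in the root `i`. -/
lemma torusExp_smul_coroot_mem_adjointGroup (i : t.root) (c : ℂ) :
    R.torusExp (c • (rootSystem t).coroot i) ∈ adjointGroup g := by
  obtain ⟨θ, hθ, hθt, -⟩ := R.exists_coreflection i
  let h : t := (c / 2) • (rootSystem t).coroot i
  have hθh : θ * R.torusExp (-h) * θ⁻¹ = R.torusExp h := by
    refine R.mul_torusExp_mul_inv (adjointGroup_le_lieAut hθ) ?_
    rw [hθt, map_neg, map_smul, RootPairing.coreflection_apply_self, smul_neg, neg_neg]
  have hcomm : R.torusExp (c • (rootSystem t).coroot i) =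
      R.torusExp h * θ * (R.torusExp h)⁻¹ * θ⁻¹ := by
    rw [mul_assoc, mul_assoc, ← mul_assoc θ, ← torusExp_neg, hθh, ← torusExp_add, ← add_smul,
      add_halves]
  rw [hcomm]
  exact mul_mem (conj_mem_adjointGroup (R.torusExp_mem_lieAut h) hθ) (inv_mem hθ)

lemma torusExp_mem_adjointGroup (h : t) : R.torusExp h ∈ adjointGroup g := by
  have hh : h ∈ Submodule.span ℂ (Set.range (rootSystem t).coroot) := by
    rw [RootPairing.IsRootSystem.span_coroot_eq_top]
    trivial
  obtain ⟨c, rfl⟩ := (Submodule.mem_span_range_iff_exists_fun ℂ).1 hh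
  refine Finset.sum_induction _ (fun k => R.torusExp k ∈ adjointGroup g) (fun k l hk hl => ?_) ?_
    fun i _ => R.torusExp_smul_coroot_mem_adjointGroup i (c i)
  · rw [torusExp_add]
    exact mul_mem hk hl
  · rw [torusExp_zero]
    exact one_mem _

lemma exists_apply_e_eq_smul_e {u : g ≃ₗ[ℂ] g} (hu : u ∈ lieAut g) {A : t → t}
    (hA : ∀ h : t, u (A h) = h) {i j : t.root}
    (hij : ∀ h, (rootSystem t).root j h = (rootSystem t).root i (A h)) :
    ∃ c : ℂ, c ≠ 0 ∧ u (R.e i) = c • R.e j := by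
  have hw : u (R.e i) ∈ rootSpace t (j.1 : t → ℂ) := by
    refine weightSpace_le_genWeightSpace g _ ((mem_weightSpace ..).2 fun h => ?_)
    change ⁅(h : g), u (R.e i)⁆ = (rootSystem t).root j h • u (R.e i)
    rw [← hA h, ← hu, R.lie_e, map_smul, hij]
  obtain ⟨c, hc⟩ := R.exists_smul_e_eq hw
  refine ⟨c, ?_, hc.symm⟩
  rintro rfl
  rw [zero_smul] at hc
  exact R.e_ne_zero i (u.map_eq_zero_iff.1 hc.symm)

section FixesCartan

variable {R} {τ : g ≃ₗ[ℂ] g} (hτ : τ ∈ lieAut g) (hτt : ∀ h : t, τ h = h)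
include hτ hτt

lemma apply_e_eq_of_root_eq_neg {i j : t.root} (hi : τ (R.e i) = R.e i)
    (hij : (rootSystem t).root j = -(rootSystem t).root i) : τ (R.e j) = R.e j := by
  obtain ⟨c, -, hc⟩ := R.exists_apply_e_eq_smul_e hτ hτt (i := j) (j := j) fun _ => rfl
  obtain ⟨k, hk, hk0⟩ := R.exists_lie_e_e_eq hij
  have hk0 : (k : g) ≠ 0 := fun h => hk0 (by rw [ZeroMemClass.coe_eq_zero.1 h, map_zero])
  have hck := hτ (R.e i) (R.e j)
  rw [hi, hc, lie_smul, hk, hτt] at hck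
  rw [hc, smul_left_injective ℂ hk0 (hck.symm.trans (one_smul ℂ (k : g)).symm), one_smul]

lemma apply_e_reflectionPerm {i j : t.root} (hi : τ (R.e i) = R.e i) (hj : τ (R.e j) = R.e j) :
    τ (R.e ((rootSystem t).reflectionPerm j i)) = R.e ((rootSystem t).reflectionPerm j i) := by
  have hfj : τ (R.f j) = R.f j := by
    obtain ⟨m, hm⟩ := exists_root_eq_neg j
    have hm' : (m.1 : t → ℂ) = -j.1 := funext fun x => LinearMap.congr_fun hm x
    obtain ⟨c, hc⟩ := R.exists_smul_e_eq (i := m) (hm' ▸ R.f_mem j)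
    rw [← hc, map_smul, apply_e_eq_of_root_eq_neg hτ hτt hj hm]
  obtain ⟨θ, hθ, hθt, hθτ⟩ := R.exists_coreflection j
  obtain ⟨c, hc0, hc⟩ := R.exists_apply_e_eq_smul_e (adjointGroup_le_lieAut hθ)
    (A := (rootSystem t).coreflection j) (i := i) (j := (rootSystem t).reflectionPerm j i)
    (fun h => by rw [hθt, RootPairing.coreflection_same])
    (fun h => by
      rw [RootPairing.root_reflectionPerm, RootPairing.reflection_apply_root,
        RootPairing.coreflection_apply]
      simp [RootPairing.pairing, mul_comm])
  have hcomm : τ (θ (R.e i)) = θ (τ (R.e i)) := LinearEquiv.congr_fun (hθτ τ hτ hj hfj) (R.e i)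
  rw [hi, hc, map_smul] at hcomm
  exact smul_right_injective g hc0 hcomm

lemma eq_one_of_forall_mem_support (b : (rootSystem t).Base)
    (hb : ∀ i ∈ b.support, τ (R.e i) = R.e i) : τ = 1 := by
  refine LinearEquiv.toLinearMap_injective (R.linearMap_ext hτt fun i => ?_)
  refine b.induction_reflect (p := fun i => τ (R.e i) = R.e i) i
    (fun i hi => apply_e_eq_of_root_eq_neg hτ hτt hi ?_) hb
    fun i j hi hj => apply_e_reflectionPerm hτ hτt hi (hb j hj)
  rw [RootPairing.root_reflectionPerm, RootPairing.reflection_apply_self]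

end FixesCartan

end RootVectors

lemma exists_forall_mem_support_root_eq (b : (rootSystem t).Base) (χ : t.root → ℂ) :
    ∃ h : t, ∀ i ∈ b.support, (rootSystem t).root i h = χ i := by
  refine ⟨(Module.evalEquiv ℂ t).symm (b.toWeightBasis.constr ℂ fun i => χ i), fun i hi => ?_⟩
  rw [Module.apply_evalEquiv_symm_apply, ← b.toWeightBasis_apply ⟨i, hi⟩, Module.Basis.constr_basis]

/-- After composition with a suitable element of the torus, the automorphism fixes the simple root
vectors, hence, being compatible with reflections, all root vectors. -/
lemma mem_adjointGroup_of_forall_apply_cartan_eq {τ : g ≃ₗ[ℂ] g} (hτ : τ ∈ lieAut g)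
    (hτt : ∀ h : t, τ h = h) : τ ∈ adjointGroup g := by
  obtain ⟨R⟩ := (inferInstance : Nonempty (RootVectors t))
  obtain ⟨b⟩ := (rootSystem t).nonempty_base
  choose χ hχ₀ hχ using fun i =>
    R.exists_apply_e_eq_smul_e hτ hτt (i := i) (j := i) fun _ => rfl
  obtain ⟨h, hh⟩ := exists_forall_mem_support_root_eq b fun i => Complex.log (χ i)
  have hone : (R.torusExp h)⁻¹ * τ = 1 := by
    rw [← R.torusExp_neg]
    refine RootVectors.eq_one_of_forall_mem_support (R := R)
      (mul_mem (R.torusExp_mem_lieAut _) hτ) (fun k => ?_) b fun i hi => ?_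
    · rw [LinearEquiv.mul_apply, hτt, R.torusExp_coe]
    · rw [LinearEquiv.mul_apply, hχ, map_smul, R.torusExp_e, map_neg, hh i hi, Complex.exp_neg,
        Complex.exp_log (hχ₀ i), smul_inv_smul₀ (hχ₀ i)]
  rw [← inv_mul_eq_one.1 hone]
  exact R.torusExp_mem_adjointGroup h

end Torus

section InvariantPolynomials

variable {V : Type*} [AddCommGroup V] [Module ℂ V]

/-- If `S ∉ W`, some `v` has `S v ∉ W v`, and the orbit polynomial
`∏ w, (ℓ (w x) - ℓ (S v))` separates `v` from `S v`. -/
lemma primeGroup_eq_of_finite (W : Subgroup (V ≃ₗ[ℂ] V)) [Finite W] : primeGroup W = W := by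
  refine le_antisymm (fun S hS => ?_) (le_primeGroup W)
  by_contra hSW
  obtain ⟨v, hv⟩ := Submodule.exists_forall_notMem_of_forall_ne_top
    (fun w : W => LinearMap.eqLocus (w : V ≃ₗ[ℂ] V).toLinearMap S.toLinearMap) fun w hw =>
      hSW <| by
        rw [← LinearEquiv.toLinearMap_injective (LinearMap.eqLocus_eq_top.1 hw)]
        exact w.2
  obtain ⟨l, hl⟩ := Module.exists_dual_forall_apply_ne_zero (K := ℂ)
    (fun w : W => (w : V ≃ₗ[ℂ] V) v - S v) fun w => sub_ne_zero.2 (hv w)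
  have := Fintype.ofFinite W
  let f : V → ℂ := fun x => ∏ w : W, (l ((w : V ≃ₗ[ℂ] V) x) - l (S v))
  have hf : IsPolyFun f := .prod fun w _ => (IsPolyFun.linear (l ∘ₗ w.1.toLinearMap)).sub (.const _)
  have hfW : ∀ w ∈ W, ∀ x, f (w x) = f x := fun w hw x =>
    Fintype.prod_equiv (Equiv.mulRight ⟨w, hw⟩) _ _ fun _ => rfl
  have hfS : f (S v) = 0 := Finset.prod_eq_zero (Finset.mem_univ 1) (sub_self _)
  refine Finset.prod_ne_zero_iff.2 (fun w _ => ?_) ((hS f hf hfW v).symm.trans hfS)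
  rw [← map_sub]
  exact hl w

end InvariantPolynomials

section Weyl

open LieAlgebra LieAlgebra.IsKilling LieSubalgebra Module

variable {g : Type*} [LieRing g] [LieAlgebra ℂ g] [FiniteDimensional ℂ g]

/-- The Weyl group of `t`, as the group of those automorphisms of `t` which are induced by the
adjoint group. -/
def weylGroup (t : LieSubalgebra ℂ g) : Subgroup (t ≃ₗ[ℂ] t) where
  carrier := {A | ∃ u ∈ adjointGroup g, ∀ h : t, u h = A h}
  one_mem' := ⟨1, one_mem _, fun _ => rfl⟩
  mul_mem' := by
    rintro A B ⟨u, hu, huA⟩ ⟨v, hv, hvB⟩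
    exact ⟨u * v, mul_mem hu hv, fun h => by
      rw [LinearEquiv.mul_apply, hvB, huA, LinearEquiv.mul_apply]⟩
  inv_mem' := by
    rintro A ⟨u, hu, huA⟩
    refine ⟨u⁻¹, inv_mem hu, fun h => ?_⟩
    rw [LinearEquiv.coe_inv, LinearEquiv.symm_apply_eq, huA, LinearEquiv.coe_inv,
      LinearEquiv.apply_symm_apply]

variable [IsKilling ℂ g] {t : LieSubalgebra ℂ g} [t.IsCartanSubalgebra]

lemma neg_mul_mem_primeGroup_adjointGroup {ψ : g ≃ₗ[ℂ] g} (hψ : ψ ∈ lieAut g)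
    (hψt : ∀ x ∈ t, ψ x = -x) : LinearEquiv.neg ℂ * ψ ∈ primeGroup (adjointGroup g) := by
  intro f hf hfG v
  obtain ⟨y, hy⟩ := exists_isRegular ℂ g
  refine sub_eq_zero.1 (((hf.comp_linear (LinearEquiv.neg ℂ * ψ).toLinearMap).sub
    hf).eq_zero_of_forall_ne_zero isPolyFun_disc (fun x hx => ?_) (disc_ne_zero.2 hy) v)
  obtain ⟨u, hu, hux⟩ := exists_mem_adjointGroup_apply_mem_cartan t (disc_ne_zero.1 hx)
  have hnx : -ψ x = (ψ * u⁻¹ * ψ⁻¹) (u x) := by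
    have hψu : ψ⁻¹ (u x) = -u x := by
      rw [LinearEquiv.coe_inv, LinearEquiv.symm_apply_eq, map_neg, hψt _ hux, neg_neg]
    rw [LinearEquiv.mul_apply, LinearEquiv.mul_apply, hψu, map_neg, map_neg, LinearEquiv.coe_inv,
      LinearEquiv.symm_apply_apply]
  change f (-ψ x) - f x = 0
  rw [hnx, hfG _ (conj_mem_adjointGroup hψ (inv_mem hu)), hfG u hu, sub_self]

lemma exists_linearEquiv_cartan {a : g ≃ₗ[ℂ] g} (ha : a ∈ lieAut g) {h : t}
    (hr : IsRegular ℂ (h : g)) (hah : a h ∈ t) : ∃ A : t ≃ₗ[ℂ] t, ∀ k : t, a k = A k := by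
  have hmem (z : g) : a z ∈ t ↔ z ∈ t := by
    simpa only [engel_eq_of_isRegular hah ((isRegular_apply_iff ha).2 hr),
      engel_eq_of_isRegular h.2 hr] using apply_mem_engel_apply_iff ha (x := (h : g)) (z := z)
  refine ⟨a.ofSubmodules t.toSubmodule t.toSubmodule (Submodule.ext fun z => ?_), fun k => rfl⟩
  rw [Submodule.mem_map_equiv, mem_toSubmodule, ← hmem, a.apply_symm_apply, mem_toSubmodule]

lemma exists_mem_weylGroup_apply_eq {u : g ≃ₗ[ℂ] g} (hu : u ∈ adjointGroup g) {h h' : t}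
    (hr : IsRegular ℂ (h : g)) (huh : u h = h') : ∃ A ∈ weylGroup t, A h = h' := by
  obtain ⟨A, hA⟩ := exists_linearEquiv_cartan (adjointGroup_le_lieAut hu) hr (huh ▸ h'.2)
  exact ⟨A, ⟨u, hu, hA⟩, Subtype.ext ((hA h).symm.trans huh)⟩

lemma exists_root_eq_of_lie_eq_smul {χ : t →ₗ[ℂ] ℂ} (hχ : χ ≠ 0) {z : g} (hz : z ≠ 0)
    (hχz : ∀ h : t, ⁅(h : g), z⁆ = χ h • z) : ∃ j, (rootSystem t).root j = χ := by
  have hmem : z ∈ LieModule.weightSpace g (χ : t → ℂ) := (LieModule.mem_weightSpace ..).2 hχz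
  let w : LieModule.Weight ℂ t g := ⟨χ, fun hbot => hz <| by
    simpa only [hbot, LieSubmodule.mem_bot] using LieModule.weightSpace_le_genWeightSpace g χ hmem⟩
  exact ⟨⟨w, Finset.mem_filter.2 ⟨Finset.mem_univ _, fun hw =>
    hχ (LinearMap.ext fun h => congrFun hw h)⟩⟩, rfl⟩

lemma eq_of_forall_root_apply_eq {h h' : t}
    (hh : ∀ i, (rootSystem t).root i h = (rootSystem t).root i h') : h = h' :=
  Module.bijective_dual_eval ℂ t |>.injective <|
    LinearMap.ext_on_range (RootPairing.IsRootSystem.span_root_eq_top (P := rootSystem t)) hh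

lemma exists_root_eq_root_comp {A : t ≃ₗ[ℂ] t} (hA : A ∈ weylGroup t) (i : t.root) :
    ∃ j, (rootSystem t).root j = (rootSystem t).root i ∘ₗ A.toLinearMap := by
  obtain ⟨R⟩ := (inferInstance : Nonempty (RootVectors t))
  obtain ⟨u, hu, huA⟩ := hA
  refine exists_root_eq_of_lie_eq_smul (fun h0 => ?_)
    ((map_ne_zero_iff _ u.symm.injective).2 (R.e_ne_zero i)) fun h => u.injective ?_
  · have h2 := LinearMap.congr_fun h0 (A.symm ((rootSystem t).coroot i))
    rw [LinearMap.comp_apply, LinearEquiv.coe_coe, A.apply_symm_apply, root_coroot_self] at h2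
    exact two_ne_zero h2
  · rw [adjointGroup_le_lieAut hu, map_smul, u.apply_symm_apply, huA, R.lie_e]
    rfl

instance : Finite (weylGroup t) := by
  choose p hp using fun (A : weylGroup t) i => exists_root_eq_root_comp A.2 i
  refine Finite.of_injective p fun A B hAB => Subtype.ext <| LinearEquiv.ext fun h =>
    eq_of_forall_root_apply_eq fun i => ?_
  have hroot := (hp A i).symm.trans ((congrArg _ (congrFun hAB i)).trans (hp B i))
  exact LinearMap.congr_fun hroot h

variable (t) in
/-- The growth bound holds because the roots of a `t`-component of `x` are eigenvalues of `ad x`. -/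
lemma exists_cartanComponent : ∃ c : g → t,
    (∀ l : t →ₗ[ℂ] ℂ, HasPolyGrowth fun x => l (c x)) ∧
      ∀ x, IsRegular ℂ x → ∃ u ∈ adjointGroup g, u x = c x := by
  obtain ⟨R⟩ := (inferInstance : Nonempty (RootVectors t))
  have hex (x : g) : ∃ c : t, (¬ IsRegular ℂ x → c = 0) ∧
      (IsRegular ℂ x → ∃ u ∈ adjointGroup g, u x = c) := by
    by_cases hx : IsRegular ℂ x
    · obtain ⟨u, hu, hux⟩ := exists_mem_adjointGroup_apply_mem_cartan t hx
      exact ⟨⟨u x, hux⟩, fun h => absurd hx h, fun _ => ⟨u, hu, rfl⟩⟩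
    · exact ⟨0, fun _ => rfl, fun h => absurd h hx⟩
  choose c hc0 hc using hex
  refine ⟨c, fun l => ?_, hc⟩
  have hroot (i : t.root) : HasPolyGrowth fun x => (rootSystem t).root i (c x) := by
    refine hasPolyGrowth_of_hasEigenvalue (ad ℂ g : g →ₗ[ℂ] Module.End ℂ g) fun x hx => ?_
    have hxr : IsRegular ℂ x := by
      by_contra hxr
      rw [hc0 x hxr, map_zero] at hx
      exact hx rfl
    obtain ⟨u, hu, hux⟩ := hc x hxr
    refine Module.End.hasEigenvalue_of_hasEigenvector (x := u.symm (R.e i))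
      ⟨Module.End.mem_eigenspace_iff.2 (u.injective ?_),
        (map_ne_zero_iff _ u.symm.injective).2 (R.e_ne_zero i)⟩
    change u ⁅x, u.symm (R.e i)⁆ = _
    rw [adjointGroup_le_lieAut hu, map_smul, u.apply_symm_apply, hux, R.lie_e]
  obtain ⟨a, rfl⟩ := (Submodule.mem_span_range_iff_exists_fun ℂ).1
    ((RootPairing.IsRootSystem.span_root_eq_top (P := rootSystem t)).ge (Submodule.mem_top : l ∈ ⊤))
  simpa only [LinearMap.sum_apply, LinearMap.smul_apply, smul_eq_mul] using
    HasPolyGrowth.sum fun i _ => (HasPolyGrowth.const (a i)).mul (hroot i)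

/-- A weak form of Chevalley's restriction theorem: clearing denominators by `disc ^ 2`, a Weyl
group invariant polynomial function on `t` extends to an invariant one on `g`. -/
lemma exists_isPolyFun_eq_disc_sq_mul {f : t → ℂ} (hf : IsPolyFun f)
    (hfW : ∀ A ∈ weylGroup t, ∀ h, f (A h) = f h) :
    ∃ F : g → ℂ, IsPolyFun F ∧ (∀ u ∈ adjointGroup g, ∀ x, F (u x) = F x) ∧
      ∀ h : t, F h = disc (h : g) ^ 2 * f h := by
  obtain ⟨R⟩ := (inferInstance : Nonempty (RootVectors t))
  obtain ⟨c, hcg, hc⟩ := exists_cartanComponent t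
  let F : g → ℂ := fun x => disc x ^ 2 * f (c x)
  have hF {u : g ≃ₗ[ℂ] g} (hu : u ∈ adjointGroup g) {x : g} {h : t} (hux : u x = h) :
      F x = disc x ^ 2 * f h := by
    by_cases hx : disc x = 0
    · simp only [F, hx, ne_eq, OfNat.ofNat_ne_zero, not_false_eq_true, zero_pow, zero_mul]
    obtain ⟨v, hv, hvx⟩ := hc x hx
    obtain ⟨A, hA, hAc⟩ := exists_mem_weylGroup_apply_eq (mul_mem hu (inv_mem hv)) (h := c x)
      (h' := h) (by rw [← hvx, isRegular_apply_iff (adjointGroup_le_lieAut hv)]; exact hx)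
      (by rw [← hvx, LinearEquiv.mul_apply, LinearEquiv.coe_inv, v.symm_apply_apply, hux])
    rw [← hAc, hfW A hA]
  have hFt (h : t) : F h = disc (h : g) ^ 2 * f h := hF (one_mem _) rfl
  have hFG : ∀ u ∈ adjointGroup g, ∀ x, F (u x) = F x := by
    intro u hu x
    have hdisc := disc_apply_of_mem_lieAut (adjointGroup_le_lieAut hu) x
    by_cases hx : disc x = 0
    · simp only [F, hdisc, hx, ne_eq, OfNat.ofNat_ne_zero, not_false_eq_true, zero_pow, zero_mul]
    obtain ⟨v, hv, hvx⟩ := hc x hx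
    rw [hF hv hvx, hF (mul_mem hv (inv_mem hu)) (h := c x)
      (by rw [LinearEquiv.mul_apply, LinearEquiv.coe_inv, u.symm_apply_apply, hvx]), hdisc]
  refine ⟨F, isPolyFun_of_forall_isSlice (T := t.toSubmodule) (A := fun i => ad ℂ g (R.e i))
    isPolyFun_disc (hf.hasPolyGrowth_comp hcg) ((isPolyFun_disc.pow 2).mul (hf.comp_linear R.proj))
    (fun _ => rfl) (fun x hx => ?_) fun y hy _ b => ?_, hFG, hFt⟩
  · obtain ⟨u, hu, hux⟩ := exists_mem_adjointGroup_apply_mem_cartan t (disc_ne_zero.1 hx)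
    have hur : IsRegular ℂ (u x) :=
      (isRegular_apply_iff (adjointGroup_le_lieAut hu)).2 (disc_ne_zero.1 hx)
    exact ⟨u, disc_ne_zero.2 hur, hFG u hu, R.isSlice (h := ⟨u x, hux⟩) (isRegular_coe_iff.1 hur)⟩
  · obtain ⟨u, hu, hu'⟩ := R.exists_mem_adjointGroup_coe_eq_expProd b
    lift y to t using hy
    rw [← hu', LinearEquiv.coe_coe, hFG u hu, hFt, R.proj_coe]

lemma mem_weylGroup_of_mem_primeGroup {τ : g ≃ₗ[ℂ] g} (hτ : τ ∈ primeGroup (adjointGroup g))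
    (hτd : ∀ x : g, disc (τ x) = disc x) {A : t ≃ₗ[ℂ] t} (hA : ∀ h : t, τ h = A h) :
    A ∈ weylGroup t := by
  rw [← primeGroup_eq_of_finite (weylGroup t)]
  intro f hf hfW v
  obtain ⟨F, hF, hFG, hFt⟩ := exists_isPolyFun_eq_disc_sq_mul hf hfW
  obtain ⟨h, hh⟩ := exists_forall_root_ne_zero t
  refine sub_eq_zero.1 (((hf.comp_linear A.toLinearMap).sub hf).eq_zero_of_forall_ne_zero
    (isPolyFun_disc.comp_linear t.toSubmodule.subtype) (fun k hk => ?_)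
    (disc_ne_zero.2 (isRegular_coe_iff.2 hh)) v)
  have hk2 := hτ F hF hFG k
  rw [hA, hFt, hFt, ← hA, hτd] at hk2
  exact sub_eq_zero.2 (mul_left_cancel₀ (pow_ne_zero 2 hk) hk2)

lemma mem_adjointGroup_of_mem_primeGroup {σ : g ≃ₗ[ℂ] g} (hσ : σ ∈ lieAut g)
    (hp : σ ∈ primeGroup (adjointGroup g)) : σ ∈ adjointGroup g := by
  obtain ⟨x, hx⟩ := exists_isRegular ℂ g
  have := isCartanSubalgebra_engel_of_isRegular hx
  obtain ⟨u, hu, hux⟩ := exists_mem_adjointGroup_apply_mem_cartan (engel ℂ x)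
    ((isRegular_apply_iff hσ).2 hx)
  have hτ : u * σ ∈ lieAut g := mul_mem (adjointGroup_le_lieAut hu) hσ
  obtain ⟨A, hA⟩ := exists_linearEquiv_cartan hτ (h := ⟨x, self_mem_engel ℂ x⟩) hx hux
  obtain ⟨w, hw, hwA⟩ := mem_weylGroup_of_mem_primeGroup (mul_mem (le_primeGroup _ hu) hp)
    (disc_apply_of_mem_lieAut hτ) hA
  have hfix : w⁻¹ * (u * σ) ∈ adjointGroup g := by
    refine mem_adjointGroup_of_forall_apply_cartan_eq (t := engel ℂ x)
      (mul_mem (inv_mem (adjointGroup_le_lieAut hw)) hτ) fun h => ?_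
    rw [LinearEquiv.mul_apply, hA, ← hwA, LinearEquiv.coe_inv, w.symm_apply_apply]
  rwa [Subgroup.mul_mem_cancel_left _ (inv_mem hw), Subgroup.mul_mem_cancel_left _ hu] at hfix

end Weyl

section PowDeriv

variable {A : Type*} [Ring A] [Algebra ℂ A]

lemma IsPolyFun.linear_apply_pow [FiniteDimensional ℂ A] {V : Type*} [AddCommGroup V] [Module ℂ V]
    (L : V →ₗ[ℂ] A) (k : ℕ) (l : A →ₗ[ℂ] ℂ) : IsPolyFun fun x => l (L x ^ k) := by
  induction k generalizing l with
  | zero => simpa using const (l 1)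
  | succ k ih =>
    let b := Module.finBasis ℂ A
    have hl (x : V) : l (L x ^ (k + 1)) =
        ∑ i, b.coord i (L x) * (l ∘ₗ LinearMap.mulLeft ℂ (b i)) (L x ^ k) := by
      conv_lhs => rw [pow_succ', ← b.sum_repr (L x), Finset.sum_mul, map_sum]
      simp
    simp only [hl]
    exact sum fun i _ => (linear (b.coord i ∘ₗ L)).mul (ih _)

lemma hasDerivAt_linear_apply_pow (l : A →ₗ[ℂ] ℂ) (a b : A) (k : ℕ) :
    HasDerivAt (fun s : ℂ => l ((a + s • b) ^ k))
      (l (∑ i ∈ Finset.range k, a ^ i * b * a ^ (k - 1 - i))) 0 := by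
  induction k generalizing l with
  | zero => simpa using hasDerivAt_const (0 : ℂ) (l 1)
  | succ k ih =>
    have hfun : (fun s : ℂ => l ((a + s • b) ^ (k + 1))) = fun s =>
        (l ∘ₗ LinearMap.mulRight ℂ a) ((a + s • b) ^ k) +
          s * (l ∘ₗ LinearMap.mulRight ℂ b) ((a + s • b) ^ k) := by
      funext s
      simp [pow_succ, mul_add]
    rw [hfun]
    refine ((ih _).add ((hasDerivAt_id' 0).mul (ih _))).congr_deriv ?_
    have hsum : ∑ i ∈ Finset.range k, a ^ i * b * a ^ (k - i) =
        (∑ i ∈ Finset.range k, a ^ i * b * a ^ (k - 1 - i)) * a := by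
      rw [Finset.sum_mul]
      refine Finset.sum_congr rfl fun i hi => ?_
      rw [mul_assoc _ _ a, ← pow_succ, Nat.sub_right_comm,
        Nat.sub_add_cancel (Nat.sub_pos_of_lt (Finset.mem_range.1 hi))]
    rw [Finset.sum_range_succ, Nat.add_sub_cancel, hsum]
    simp [-map_sum]

omit [Algebra ℂ A] in
lemma sum_pow_mul_lie_mul_pow (a y : A) (k : ℕ) :
    ∑ i ∈ Finset.range k, a ^ i * ⁅y, a⁆ * a ^ (k - 1 - i) = ⁅y, a ^ k⁆ := by
  have hterm (i : ℕ) (hi : i ∈ Finset.range k) : a ^ i * ⁅y, a⁆ * a ^ (k - 1 - i) =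
      a ^ i * y * a ^ (k - i) - a ^ (i + 1) * y * a ^ (k - (i + 1)) := by
    obtain ⟨j, rfl⟩ := Nat.exists_eq_add_of_lt (Finset.mem_range.1 hi)
    rw [show i + j + 1 - 1 - i = j by lia, show i + j + 1 - i = j + 1 by lia,
      show i + j + 1 - (i + 1) = j by lia, Ring.lie_def]
    simp only [mul_sub, sub_mul, pow_succ' a j, pow_succ a i, mul_assoc]
  rw [Finset.sum_congr rfl hterm, Finset.sum_range_sub' (fun i => a ^ i * y * a ^ (k - i))]
  simp [Ring.lie_def]

end PowDeriv

section PolarTrace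

open LieAlgebra LieModule

attribute [local instance] LieRing.ofAssociativeRing

variable {g : Type*} [LieRing g] [LieAlgebra ℂ g]

/-- The polarisation `y ↦ tr ((ad x) ^ k * ad y)` of the trace polynomial
`x ↦ tr ((ad x) ^ (k + 1))`, up to the factor `k + 1`. -/
def polarTrace (k : ℕ) (x : g) : g →ₗ[ℂ] ℂ :=
  LinearMap.trace ℂ g ∘ₗ LinearMap.mulLeft ℂ (ad ℂ g x ^ k) ∘ₗ (ad ℂ g : g →ₗ[ℂ] Module.End ℂ g)

lemma polarTrace_apply (k : ℕ) (x y : g) :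
    polarTrace k x y = LinearMap.trace ℂ g (ad ℂ g x ^ k * ad ℂ g y) := rfl

lemma polarTrace_one (x : g) : polarTrace 1 x = killingForm ℂ g x := by
  ext y
  rw [polarTrace_apply, pow_one]
  rfl

lemma hasDerivAt_trace_ad_pow (x y : g) (k : ℕ) :
    HasDerivAt (fun s : ℂ => LinearMap.trace ℂ g (ad ℂ g (x + s • y) ^ (k + 1)))
      ((k + 1) * polarTrace k x y) 0 := by
  simp only [map_add, map_smul]
  refine (hasDerivAt_linear_apply_pow (LinearMap.trace ℂ g) _ _ _).congr_deriv ?_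
  have hterm (i : ℕ) (hi : i ∈ Finset.range (k + 1)) :
      LinearMap.trace ℂ g (ad ℂ g x ^ i * ad ℂ g y * ad ℂ g x ^ (k + 1 - 1 - i)) =
        polarTrace k x y := by
    rw [LinearMap.trace_mul_comm, ← mul_assoc, ← pow_add, polarTrace_apply, Nat.add_sub_cancel,
      Nat.sub_add_cancel (Finset.mem_range_succ_iff.1 hi)]
  rw [map_sum, Finset.sum_congr rfl hterm]
  simp

lemma polarTrace_apply_of_mem_primeGroup [FiniteDimensional ℂ g] {φ : g ≃ₗ[ℂ] g}
    (hφ : φ ∈ primeGroup (adjointGroup g)) (k : ℕ) (x y : g) :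
    polarTrace k (φ x) (φ y) = polarTrace k x y := by
  have htrace (z : g) : LinearMap.trace ℂ g (ad ℂ g (φ z) ^ (k + 1)) =
      LinearMap.trace ℂ g (ad ℂ g z ^ (k + 1)) := by
    refine hφ _ (.linear_apply_pow (ad ℂ g : g →ₗ[ℂ] Module.End ℂ g) _ _) (fun u hu v => ?_) z
    rw [LieHom.coe_toLinearMap, ad_apply_of_mem_lieAut (adjointGroup_le_lieAut hu),
      show u.conj (ad ℂ g v) ^ (k + 1) = u.conj (ad ℂ g v ^ (k + 1)) from
        (map_pow (LinearEquiv.conjAlgEquiv ℂ u) _ _).symm, LinearMap.trace_conj']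
  have hderiv := hasDerivAt_trace_ad_pow (φ x) (φ y) k
  simp only [← map_smul, ← map_add, htrace] at hderiv
  exact mul_left_cancel₀ (Nat.cast_add_one_ne_zero k)
    (hderiv.unique (hasDerivAt_trace_ad_pow x y k))

/-- An endomorphism `D` is trace-skew if its flow infinitesimally preserves the trace polynomials
`x ↦ tr ((ad x) ^ (k + 1))`. -/
def IsTraceSkew (D : Module.End ℂ g) : Prop :=
  ∀ (k : ℕ) (x : g), polarTrace k x (D x) = 0

lemma isTraceSkew_ad (y : g) : IsTraceSkew (ad ℂ g y) := fun k x => by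
  rw [polarTrace_apply, ad_apply, LieHom.map_lie, Ring.lie_def, mul_sub, map_sub,
    LinearMap.trace_mul_cycle', ← mul_assoc, ← mul_assoc, ← pow_succ', ← pow_succ, sub_self]

namespace IsTraceSkew

variable {D : Module.End ℂ g}

lemma conj [FiniteDimensional ℂ g] (hD : IsTraceSkew D) {φ : g ≃ₗ[ℂ] g}
    (hφ : φ ∈ primeGroup (adjointGroup g)) : IsTraceSkew (φ.conj D) := fun k x => by
  rw [LinearEquiv.conj_apply_apply, ← polarTrace_apply_of_mem_primeGroup (inv_mem hφ),
    ← hD k (φ⁻¹ x)]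
  exact congrArg _ (φ.symm_apply_apply _)

lemma lie (hD : IsTraceSkew D) (w : g) : IsTraceSkew ⁅ad ℂ g w, D⁆ := fun k x => by
  let T := LinearMap.trace ℂ g
  have hline (s : ℂ) : polarTrace k (x + s • ⁅w, x⁆) (D x) +
      s * polarTrace k (x + s • ⁅w, x⁆) (D ⁅w, x⁆) = 0 := by
    simpa using hD k (x + s • ⁅w, x⁆)
  simp only [polarTrace_apply, map_add (ad ℂ g), map_smul (ad ℂ g)] at hline
  have hderiv := (hasDerivAt_linear_apply_pow (T ∘ₗ LinearMap.mulRight ℂ (ad ℂ g (D x)))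
    (ad ℂ g x) (ad ℂ g ⁅w, x⁆) k).add ((hasDerivAt_id' 0).mul (hasDerivAt_linear_apply_pow
      (T ∘ₗ LinearMap.mulRight ℂ (ad ℂ g (D ⁅w, x⁆))) (ad ℂ g x) (ad ℂ g ⁅w, x⁆) k))
  have hzero := hderiv.unique ((hasDerivAt_const (0 : ℂ) (0 : ℂ)).congr_of_eventuallyEq
    (.of_forall hline))
  have hcycle (X W Y : Module.End ℂ g) : T (⁅W, X⁆ * Y) = -T (X * ⁅W, Y⁆) := by
    rw [Ring.lie_def, Ring.lie_def, sub_mul, mul_sub, map_sub, map_sub, mul_assoc W,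
      LinearMap.trace_mul_comm ℂ W, mul_assoc, mul_assoc, neg_sub]
  rw [LieHom.map_lie, sum_pow_mul_lie_mul_pow] at hzero
  simp only [LinearMap.comp_apply, LinearMap.mulRight_apply, hcycle] at hzero
  rw [Ring.lie_def, LinearMap.sub_apply, map_sub, Module.End.mul_apply, Module.End.mul_apply,
    ad_apply, ad_apply, polarTrace_apply, polarTrace_apply, LieHom.map_lie]
  simp only [zero_smul, add_zero, one_mul, mul_neg, zero_mul, neg_zero] at hzero
  linear_combination -hzero

lemma killingForm_apply_comm (hD : IsTraceSkew D) (x y : g) :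
    killingForm ℂ g (D x) y = -killingForm ℂ g (D y) x := by
  have hself (z : g) : killingForm ℂ g (D z) z = 0 := by
    rw [traceForm_comm, ← polarTrace_one, hD]
  have hxy := hself (x + y)
  simp only [map_add, LinearMap.add_apply, hself] at hxy
  linear_combination hxy

end IsTraceSkew

end PolarTrace

section TraceSkewCartan

open LieAlgebra LieAlgebra.IsKilling LieModule Module

attribute [local instance] LieRing.ofAssociativeRing

lemma eq_zero_of_forall_sum_pow_mul_eq_zero {ι : Type*} [Fintype ι] {v c : ι → ℂ}
    (hv : Function.Injective v) (h : ∀ k : ℕ, ∑ i, v i ^ k * c i = 0) : c = 0 := by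
  have hli : LinearIndependent ℂ fun i => (powersHom ℂ (v i) : Multiplicative ℕ → ℂ) :=
    (linearIndependent_monoidHom (Multiplicative ℕ) ℂ).comp (fun i => powersHom ℂ (v i))
      ((powersHom ℂ).injective.comp hv)
  refine funext (Fintype.linearIndependent_iff.1 hli c (funext fun k => ?_))
  simpa [mul_comm] using h k.toAdd

variable {g : Type*} [LieRing g] [LieAlgebra ℂ g] [FiniteDimensional ℂ g] [IsKilling ℂ g]
  {t : LieSubalgebra ℂ g} [t.IsCartanSubalgebra]

namespace RootVectors

variable (R : RootVectors t)

include R in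
lemma polarTrace_coe_coe (k : ℕ) (h h' : t) : polarTrace k (h : g) h' =
    ∑ i, (rootSystem t).root i h ^ k * (rootSystem t).root i h' := by
  classical
  let d : t.root → ℂ := fun i => (rootSystem t).root i h' * (rootSystem t).root i h ^ k
  have hconj : ad ℂ g (h : g) ^ k * ad ℂ g (h' : g) =
      R.decomp.conj (LinearMap.prodMap 0 (Matrix.diagonal d).toLin') := by
    ext x
    obtain ⟨⟨k, c⟩, rfl⟩ := R.decomp.surjective x
    rw [Module.End.mul_apply, ad_apply, R.lie_decomp, R.ad_pow_decomp, LinearEquiv.conj_apply_apply,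
      R.decomp.symm_apply_apply]
    refine congrArg _ (Prod.ext rfl (funext fun i => ?_))
    simp [d, Matrix.mulVec_diagonal]
    ring
  rw [polarTrace_apply, hconj, LinearMap.trace_conj', LinearMap.trace_prodMap', map_zero, zero_add,
    Matrix.trace_toLin'_eq, Matrix.trace_diagonal]
  exact Finset.sum_congr rfl fun i _ => mul_comm _ _

lemma polarTrace_coe_e (k : ℕ) (h : t) (i : t.root) : polarTrace k (h : g) (R.e i) = 0 := by
  let a := (rootSystem t).coroot i
  have hcomm : Commute (ad ℂ g (h : g) ^ k) (ad ℂ g (a : g)) :=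
    (commute_iff_lie_eq.2 (by
      rw [← LieHom.map_lie, lie_eq_zero_of_mem_cartan h.2 a.2, map_zero])).pow_left k
  have hbracket : polarTrace k (h : g) ⁅(a : g), R.e i⁆ = 0 := by
    rw [polarTrace_apply, LieHom.map_lie, Ring.lie_def, mul_sub, map_sub, ← mul_assoc, hcomm.eq,
      mul_assoc, LinearMap.trace_mul_comm, mul_assoc, sub_self]
  rw [R.lie_e, root_coroot_self, map_smul, smul_eq_mul] at hbracket
  simpa using hbracket

lemma polarTrace_coe_proj (k : ℕ) (h : t) (x : g) :
    polarTrace k (h : g) (R.proj x) = polarTrace k (h : g) x := by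
  have hF : polarTrace k (h : g) ∘ₗ t.subtype ∘ₗ R.proj = polarTrace k (h : g) :=
    R.linearMap_ext (fun k => by simp [R.proj_coe]) fun i => by
      simp [R.proj_e, R.polarTrace_coe_e]
  exact LinearMap.congr_fun hF x

end RootVectors

namespace IsTraceSkew

variable {D : Module.End ℂ g}

lemma proj_apply_coe (hD : IsTraceSkew D) (R : RootVectors t) (h : t) : R.proj (D h) = 0 := by
  refine eq_of_forall_root_apply_eq fun i => ?_
  by_contra hne
  let L : Dual ℂ t := (rootSystem t).root i ∘ₗ R.proj ∘ₗ D ∘ₗ t.toSubmodule.subtype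
  obtain ⟨k, hk⟩ := Module.Dual.exists_forall_ne_zero_of_forall_exists
    (Sum.elim (fun p : {p : t.root × t.root // p.1 ≠ p.2} =>
      (rootSystem t).root p.1.1 - (rootSystem t).root p.1.2) fun _ : Unit => L) <| by
    rintro (⟨p, hp⟩ | _)
    · exact DFunLike.ne_iff.1 (sub_ne_zero.2 ((rootSystem t).root.injective.ne hp))
    · exact ⟨h, fun hL => hne (hL.trans (map_zero _).symm)⟩
  have hv : Function.Injective fun j => (rootSystem t).root j k := fun a b hab => by
    by_contra hne
    exact hk (.inl ⟨(a, b), hne⟩) (sub_eq_zero.2 hab)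
  have hc := eq_zero_of_forall_sum_pow_mul_eq_zero hv
    (c := fun j => (rootSystem t).root j (R.proj (D k))) fun n => by
      rw [← R.polarTrace_coe_coe, R.polarTrace_coe_proj, hD]
  exact hk (.inr ()) (congrFun hc i)

lemma killingForm_coe_coe (hD : IsTraceSkew D) (R : RootVectors t) (h h' : t) :
    killingForm ℂ g (D h) h' = 0 := by
  rw [traceForm_comm, ← polarTrace_one, ← R.polarTrace_coe_proj, hD.proj_apply_coe R]
  simp

end IsTraceSkew

end TraceSkewCartan

section LeibnizDefect

open LieAlgebra LieAlgebra.IsKilling LieModule Module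

attribute [local instance] LieRing.ofAssociativeRing

variable {g : Type*} [LieRing g] [LieAlgebra ℂ g]

/-- The failure `D ⁅x, y⁆ - ⁅D x, y⁆ - ⁅x, D y⁆` of an endomorphism `D` to be a derivation. -/
def leibnizDefect (D : Module.End ℂ g) : g →ₗ[ℂ] g →ₗ[ℂ] g :=
  (ad ℂ g).toLinearMap.compr₂ D - (ad ℂ g).toLinearMap ∘ₗ D - (ad ℂ g).toLinearMap.compl₂ D

lemma leibnizDefect_apply (D : Module.End ℂ g) (x y : g) :
    leibnizDefect D x y = D ⁅x, y⁆ - ⁅D x, y⁆ - ⁅x, D y⁆ := rfl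

lemma leibnizDefect_swap (D : Module.End ℂ g) (x y : g) :
    leibnizDefect D x y = -leibnizDefect D y x := by
  rw [leibnizDefect_apply, leibnizDefect_apply, ← lie_skew x y, ← lie_skew x, ← lie_skew _ y,
    map_neg]
  abel

lemma leibnizDefect_lie (D : Module.End ℂ g) (w x y : g) : leibnizDefect ⁅ad ℂ g w, D⁆ x y =
    ⁅w, leibnizDefect D x y⁆ - leibnizDefect D ⁅w, x⁆ y - leibnizDefect D x ⁅w, y⁆ := by
  simp only [leibnizDefect_apply, Ring.lie_def, LinearMap.sub_apply, Module.End.mul_apply, ad_apply,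
    lie_sub, sub_lie, leibniz_lie w x y, leibniz_lie w (D x) y, leibniz_lie w x (D y), map_add]
  abel

lemma killingForm_leibnizDefect (D : Module.End ℂ g) (x y z : g) :
    killingForm ℂ g (leibnizDefect D x y) z = killingForm ℂ g (D ⁅x, y⁆) z -
      killingForm ℂ g (D x) ⁅y, z⁆ + killingForm ℂ g (D y) ⁅x, z⁆ := by
  have hinv (a b c : g) : killingForm ℂ g ⁅a, b⁆ c = killingForm ℂ g a ⁅b, c⁆ :=
    traceForm_apply_lie_apply ℂ g g a b c
  rw [leibnizDefect_apply, ← lie_skew x (D y), sub_neg_eq_add, map_add, map_sub,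
    LinearMap.add_apply, LinearMap.sub_apply, hinv, hinv]

lemma IsTraceSkew.killingForm_leibnizDefect_cycle {D : Module.End ℂ g} (hD : IsTraceSkew D)
    (x y z : g) :
    killingForm ℂ g (leibnizDefect D x y) z = killingForm ℂ g (leibnizDefect D y z) x := by
  rw [killingForm_leibnizDefect, killingForm_leibnizDefect, hD.killingForm_apply_comm x,
    hD.killingForm_apply_comm z, ← lie_skew z x, ← lie_skew y x, map_neg, map_neg, map_neg,
    LinearMap.neg_apply]
  ring

lemma IsTraceSkew.killingForm_leibnizDefect_swap {D : Module.End ℂ g} (hD : IsTraceSkew D)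
    (x y z : g) :
    killingForm ℂ g (leibnizDefect D x y) z = -killingForm ℂ g (leibnizDefect D x z) y := by
  rw [hD.killingForm_leibnizDefect_cycle, hD.killingForm_leibnizDefect_cycle, leibnizDefect_swap,
    map_neg, LinearMap.neg_apply]

variable [FiniteDimensional ℂ g] [IsKilling ℂ g] {t : LieSubalgebra ℂ g} [t.IsCartanSubalgebra]

namespace RootVectors

variable (R : RootVectors t)

lemma lie_e_coe (h : t) (i : t.root) :
    ⁅R.e i, (h : g)⁆ = -((rootSystem t).root i h • R.e i) := by
  rw [← lie_skew, R.lie_e]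

include R

lemma eq_zero_of_killingForm_eq_zero {x : g} (ht : ∀ h : t, killingForm ℂ g x h = 0)
    (he : ∀ i, killingForm ℂ g x (R.e i) = 0) : x = 0 := by
  rw [← Submodule.mem_bot ℂ, ← ker_killingForm_eq_bot ℂ g, LinearMap.mem_ker]
  exact R.linearMap_ext ht he

variable {D : Module.End ℂ g}

lemma leibnizDefect_coe_coe (hD : IsTraceSkew D) (h h' : t) :
    leibnizDefect D (h : g) (h' : g) = 0 := by
  refine R.eq_zero_of_killingForm_eq_zero (fun k => ?_) fun i => ?_
  · simp only [killingForm_leibnizDefect, lie_eq_zero_of_mem_cartan (SetLike.coe_mem _)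
      (SetLike.coe_mem _), map_zero, LinearMap.zero_apply, sub_zero, add_zero]
  · have hi := (hD.lie (R.e i)).killingForm_coe_coe R h h'
    rw [Ring.lie_def, LinearMap.sub_apply, Module.End.mul_apply, Module.End.mul_apply, ad_apply,
      ad_apply, ← lie_skew, R.lie_e_coe, map_neg D, map_smul, map_sub, map_neg, map_neg,
      LinearMap.sub_apply, LinearMap.neg_apply, LinearMap.neg_apply,
      show killingForm ℂ g ⁅D h, R.e i⁆ h' = _ from traceForm_apply_lie_apply ℂ g g _ _ _,
      R.lie_e_coe, map_neg, map_smul, map_smul, LinearMap.smul_apply,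
      hD.killingForm_apply_comm (R.e i)] at hi
    rw [killingForm_leibnizDefect, lie_eq_zero_of_mem_cartan h.2 h'.2, map_zero, map_zero,
      LinearMap.zero_apply, R.lie_e, R.lie_e, map_smul, map_smul]
    simp only [smul_eq_mul] at hi ⊢
    linear_combination -hi

lemma root_smul_leibnizDefect_coe_e (hD : IsTraceSkew D) (h h' : t) (i : t.root) :
    (rootSystem t).root i h • leibnizDefect D (h' : g) (R.e i) =
      (rootSystem t).root i h' • leibnizDefect D (h : g) (R.e i) := by
  have hlie := leibnizDefect_lie D (R.e i) h h'
  rw [R.leibnizDefect_coe_coe (hD.lie _), R.leibnizDefect_coe_coe hD, lie_zero, R.lie_e_coe,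
    R.lie_e_coe, map_neg, map_neg, map_smul, map_smul, LinearMap.neg_apply, LinearMap.smul_apply,
    leibnizDefect_swap D (R.e i)] at hlie
  rw [← sub_eq_zero, ← neg_eq_zero, hlie]
  module

lemma exists_killingForm_leibnizDefect_coe_e_eq (hD : IsTraceSkew D) (i : t.root) (x : g) :
    ∃ a, ∀ h : t, killingForm ℂ g (leibnizDefect D (h : g) (R.e i)) x =
      (rootSystem t).root i h * a := by
  let b := (rootSystem t).coroot i
  refine ⟨killingForm ℂ g (leibnizDefect D (b : g) (R.e i)) x / 2, fun h => ?_⟩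
  have hb := congrArg (killingForm ℂ g · x) (R.root_smul_leibnizDefect_coe_e hD b h i)
  simp only [map_smul, LinearMap.smul_apply, b, root_coroot_self, smul_eq_mul] at hb
  linear_combination hb / 2

lemma killingForm_leibnizDefect_coe_e_e (hD : IsTraceSkew D) (h : t) (i j : t.root) :
    killingForm ℂ g (leibnizDefect D (h : g) (R.e i)) (R.e j) = 0 := by
  have hswap (h : t) := hD.killingForm_leibnizDefect_swap (h : g) (R.e i) (R.e j)
  obtain ⟨a, ha⟩ := R.exists_killingForm_leibnizDefect_coe_e_eq hD i (R.e j)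
  obtain ⟨b, hb⟩ := R.exists_killingForm_leibnizDefect_coe_e_eq hD j (R.e i)
  by_cases hb0 : b = 0
  · rw [hswap, hb, hb0, mul_zero, neg_zero]
  have hroot : (rootSystem t).root j = (-a / b) • (rootSystem t).root i := by
    ext k
    have hk := hswap k
    rw [ha, hb] at hk
    rw [LinearMap.smul_apply, smul_eq_mul]
    field_simp
    linear_combination hk
  obtain rfl | hneg := eq_or_root_eq_neg_of_root_eq_smul hroot
  · exact self_eq_neg.1 (hswap h)
  · obtain ⟨k, hk, hik⟩ := R.exists_lie_e_e_eq hneg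
    have hneg_k : (rootSystem t).root j k = -(rootSystem t).root i k := LinearMap.congr_fun hneg k
    have hself := hD.killingForm_apply_comm (k : g) k
    have hdefect : killingForm ℂ g (leibnizDefect D (k : g) (R.e i)) (R.e j) = 0 := by
      rw [killingForm_leibnizDefect, R.lie_e, R.lie_e, hk, self_eq_neg.1 hself, map_smul, map_smul,
        map_smul, LinearMap.smul_apply, hneg_k]
      simp
    rw [ha] at hdefect ⊢
    rw [(mul_eq_zero.1 hdefect).resolve_left hik, mul_zero]

lemma leibnizDefect_coe (hD : IsTraceSkew D) (h : t) : leibnizDefect D (h : g) = 0 := by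
  refine R.linearMap_ext (R.leibnizDefect_coe_coe hD h) fun i => ?_
  refine R.eq_zero_of_killingForm_eq_zero (fun k => ?_) (R.killingForm_leibnizDefect_coe_e_e hD h i)
  rw [← hD.killingForm_leibnizDefect_cycle, R.leibnizDefect_coe_coe hD, map_zero,
    LinearMap.zero_apply]

lemma leibnizDefect_eq_zero (hD : IsTraceSkew D) : leibnizDefect D = 0 := by
  refine R.linearMap_ext (R.leibnizDefect_coe hD) fun i => LinearMap.ext fun y => ?_
  have hlie := leibnizDefect_lie D (R.e i) ((rootSystem t).coroot i : g) y
  rw [R.leibnizDefect_coe (hD.lie _), R.leibnizDefect_coe hD, R.lie_e_coe, root_coroot_self]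
    at hlie
  simpa [eq_comm (a := (0 : g))] using hlie

end RootVectors

lemma IsTraceSkew.exists_ad_eq {D : Module.End ℂ g} (hD : IsTraceSkew D) :
    ∃ z, ad ℂ g z = D := by
  obtain ⟨x, hx⟩ := LieAlgebra.exists_isRegular ℂ g
  have := isCartanSubalgebra_engel_of_isRegular hx
  obtain ⟨R⟩ := (inferInstance : Nonempty (RootVectors (LieSubalgebra.engel ℂ x)))
  have hleibniz (x y : g) : D ⁅x, y⁆ = ⁅x, D y⁆ - ⁅y, D x⁆ := by
    have hxy := LinearMap.congr_fun₂ (R.leibnizDefect_eq_zero hD) x y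
    rw [leibnizDefect_apply, ← lie_skew (D x) y, sub_neg_eq_add] at hxy
    exact eq_sub_of_add_eq (sub_eq_zero.1 hxy)
  obtain ⟨z, hz⟩ := LieDerivation.IsKilling.exists_eq_ad (⟨D, hleibniz⟩ : LieDerivation ℂ g g)
  exact ⟨z, LinearMap.ext fun y => by
    rw [← LieDerivation.coe_ad_apply_eq_ad_apply, hz]⟩

end LeibnizDefect

section SignedAutomorphisms

open LieAlgebra LieAlgebra.IsKilling LieModule Module

attribute [local instance] LieRing.ofAssociativeRing

lemma exists_forall_apply_eq_smul {L M : Type*} [LieRing L] [LieAlgebra ℂ L] [AddCommGroup M]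
    [Module ℂ M] [LieRingModule L M] [LieModule ℂ L M] [FiniteDimensional ℂ M]
    [LieModule.IsIrreducible ℂ L M] (θ : M →ₗ⁅ℂ,L⁆ M) : ∃ c : ℂ, ∀ m, θ m = c • m := by
  have := LieModule.nontrivial_of_isIrreducible ℂ L M
  obtain ⟨c, hc⟩ := Module.End.exists_eigenvalue (θ : Module.End ℂ M)
  obtain ⟨v, hv⟩ := hc.exists_hasEigenvector
  have hker (m : M) : m ∈ (θ - c • LieModuleHom.id).ker ↔ θ m = c • m := by
    simp [LieModuleHom.mem_ker, sub_eq_zero]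
  have hne : (θ - c • LieModuleHom.id).ker ≠ ⊥ := fun hbot =>
    hv.2 ((LieSubmodule.mem_bot v).1 (hbot ▸ (hker v).2 hv.apply_eq_smul))
  have htop := (eq_bot_or_eq_top (θ - c • LieModuleHom.id).ker).resolve_left hne
  exact ⟨c, fun m => (hker m).1 (htop ▸ LieSubmodule.mem_top m)⟩

variable {g : Type*} [LieRing g] [LieAlgebra ℂ g]

lemma commute_neg_linearEquiv (φ : g ≃ₗ[ℂ] g) : Commute (LinearEquiv.neg ℂ) φ :=
  LinearEquiv.ext fun x => (map_neg φ x).symm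

lemma neg_notMem_lieAut (h : ¬IsLieAbelian g) : LinearEquiv.neg ℂ ∉ lieAut g := fun hneg => by
  refine h ⟨fun x y => ?_⟩
  have hxy : -⁅x, y⁆ = ⁅-x, -y⁆ := hneg x y
  rw [neg_lie, lie_neg, neg_neg, neg_eq_iff_add_eq_zero, ← two_smul ℂ] at hxy
  exact (smul_eq_zero.1 hxy).resolve_left two_ne_zero

lemma neg_mul_notMem_lieAut (h : ¬IsLieAbelian g) {σ : g ≃ₗ[ℂ] g} (hσ : σ ∈ lieAut g) :
    LinearEquiv.neg ℂ * σ ∉ lieAut g := by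
  rw [Subgroup.mul_mem_cancel_right _ hσ]
  exact neg_notMem_lieAut h

variable [FiniteDimensional ℂ g]

lemma exists_mem_lieAut_of_conj_ad [HasTrivialRadical ℂ g] {φ : g ≃ₗ[ℂ] g}
    (h : ∀ x, ∃ z, ad ℂ g z = φ.conj (ad ℂ g x)) :
    ∃ σ ∈ lieAut g, ∀ x, ad ℂ g (σ x) = φ.conj (ad ℂ g x) := by
  have hinj : Function.Injective (ad ℂ g : g →ₗ[ℂ] Module.End ℂ g) :=
    (LieHom.ker_eq_bot _).1 (ad_ker_eq_bot_of_hasTrivialRadical ℂ g)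
  let s : g →ₗ[ℂ] g := (LinearEquiv.ofInjective _ hinj).symm.toLinearMap ∘ₗ
    LinearMap.codRestrict _ (φ.conj.toLinearMap ∘ₗ (ad ℂ g : g →ₗ[ℂ] Module.End ℂ g)) h
  have hs (x : g) : ad ℂ g (s x) = φ.conj (ad ℂ g x) :=
    congrArg Subtype.val ((LinearEquiv.ofInjective _ hinj).apply_symm_apply _)
  have hs_inj : Function.Injective s := fun x y hxy =>
    hinj (φ.conj.injective ((hs x).symm.trans ((congrArg _ hxy).trans (hs y))))
  refine ⟨LinearEquiv.ofInjectiveEndo s hs_inj, fun x y => hinj ?_, hs⟩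
  change ad ℂ g (s ⁅x, y⁆) = ad ℂ g ⁅s x, s y⁆
  rw [LieHom.map_lie, hs, hs, hs, LieHom.map_lie]
  exact φ.lieConj.map_lie _ _

lemma mul_self_eq_one_of_mem_primeGroup [IsKilling ℂ g] [Nontrivial g] {φ σ : g ≃ₗ[ℂ] g}
    (hφ : φ ∈ primeGroup (adjointGroup g)) (hσ : σ ∈ lieAut g) {c : ℂ}
    (h : ∀ x, φ x = c • σ x) : c * c = 1 := by
  obtain ⟨x, hx⟩ := exists_ne (0 : g)
  obtain ⟨y, hy⟩ : ∃ y, killingForm ℂ g x y ≠ 0 := by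
    by_contra! h0
    exact hx (by rw [← Submodule.mem_bot ℂ, ← ker_killingForm_eq_bot ℂ g]; exact LinearMap.ext h0)
  have hφxy := polarTrace_apply_of_mem_primeGroup hφ 1 x y
  let e : g ≃ₗ⁅ℂ⁆ g := { σ with map_lie' := hσ _ _ }
  rw [polarTrace_one, polarTrace_one, h, h, map_smul, map_smul, LinearMap.smul_apply,
    show killingForm ℂ g (σ x) (σ y) = _ from killingForm_of_equiv_apply e x y] at hφxy
  refine mul_right_cancel₀ hy ?_
  simpa [mul_assoc] using hφxy

lemma exists_mem_lieAut_eq_or_eq_neg_mul [IsSimple ℂ g] {φ : g ≃ₗ[ℂ] g}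
    (hφ : φ ∈ primeGroup (adjointGroup g)) :
    ∃ σ ∈ lieAut g, φ = σ ∨ φ = LinearEquiv.neg ℂ * σ := by
  obtain ⟨σ, hσ, had⟩ := exists_mem_lieAut_of_conj_ad fun x =>
    ((isTraceSkew_ad x).conj hφ).exists_ad_eq
  have hlie (x y : g) : φ ⁅x, y⁆ = ⁅σ x, φ y⁆ := by
    simpa using (LinearMap.congr_fun (had x) (φ y)).symm
  let θ : g →ₗ⁅ℂ,g⁆ g :=
    { (σ⁻¹ * φ).toLinearMap with
      map_lie' := fun {x y} => by
        change σ⁻¹ (φ ⁅x, y⁆) = ⁅x, σ⁻¹ (φ y)⁆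
        rw [hlie, inv_mem hσ, LinearEquiv.coe_inv, σ.symm_apply_apply] }
  obtain ⟨c, hc⟩ := exists_forall_apply_eq_smul θ
  have hφσ (x : g) : φ x = c • σ x := by
    rw [← map_smul, ← hc]
    exact (σ.apply_symm_apply _).symm
  have := LieModule.nontrivial_of_isIrreducible ℂ g g
  refine ⟨σ, hσ, ?_⟩
  obtain rfl | rfl := mul_self_eq_one_iff.1 (mul_self_eq_one_of_mem_primeGroup hφ hσ hφσ)
  · exact .inl (LinearEquiv.ext fun x => (hφσ x).trans (one_smul _ _))
  · exact .inr (LinearEquiv.ext fun x => (hφσ x).trans (neg_one_smul _ _))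

end SignedAutomorphisms

section Main

open LieAlgebra

variable {g : Type*} [LieRing g] [LieAlgebra ℂ g] [FiniteDimensional ℂ g] [IsSimple ℂ g]

lemma conj_mem_adjointGroup_of_mem_primeGroup {φ u : g ≃ₗ[ℂ] g}
    (hφ : φ ∈ primeGroup (adjointGroup g)) (hu : u ∈ adjointGroup g) :
    φ * u * φ⁻¹ ∈ adjointGroup g := by
  obtain ⟨σ, hσ, rfl | rfl⟩ := exists_mem_lieAut_eq_or_eq_neg_mul hφ
  · exact conj_mem_adjointGroup hσ hu
  · rw [mul_inv_rev, mul_assoc _ σ u, mul_assoc, ← mul_assoc (σ * u), ← mul_assoc,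
      (commute_neg_linearEquiv _).eq, mul_inv_cancel_right]
    exact conj_mem_adjointGroup hσ hu

lemma mem_adjointGroup_or_exists_eq_neg_mul_mul {φ ψ : g ≃ₗ[ℂ] g}
    (hφ : φ ∈ primeGroup (adjointGroup g)) (hψ : ψ ∈ lieAut g)
    (hψ' : LinearEquiv.neg ℂ * ψ ∈ primeGroup (adjointGroup g)) :
    φ ∈ adjointGroup g ∨ ∃ u ∈ adjointGroup g, φ = LinearEquiv.neg ℂ * ψ * u := by
  obtain ⟨σ, hσ, rfl | rfl⟩ := exists_mem_lieAut_eq_or_eq_neg_mul hφ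
  · exact .inl (mem_adjointGroup_of_mem_primeGroup hσ hφ)
  · refine .inr ⟨ψ⁻¹ * σ, mem_adjointGroup_of_mem_primeGroup (mul_mem (inv_mem hψ) hσ) ?_, ?_⟩
    · simpa [mul_assoc] using mul_mem (inv_mem hψ') hφ
    · rw [mul_assoc, mul_inv_cancel_left]

end Main

/-- Let `g` be a complex simple Lie algebra and `G = Aut(g)⁰` its
adjoint group acting on `V = g`.  Then `G` is a normal subgroup of `G'`, the quotient
`G'/G` has order 2, and `G'/G` is generated by the coset of `-ψ`, where `ψ` is the
Chevalley involution.  In particular `-ψ ∈ G'` and `-ψ ∉ G`. -/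
theorem stmt7 (g : Type) [LieRing g] [LieAlgebra ℂ g] [FiniteDimensional ℂ g]
    [LieAlgebra.IsSimple ℂ g]
    (t : LieSubalgebra ℂ g) [t.IsCartanSubalgebra]
    -- the Chevalley involution `ψ`
    (ψ : g ≃ₗ⁅ℂ⁆ g) (hψ2 : ∀ x : g, ψ (ψ x) = x) (hψt : ∀ x ∈ t, ψ x = -x)
    -- the linear map `-ψ`
    (negψ : g ≃ₗ[ℂ] g) (hnegψ : negψ = ψ.toLinearEquiv.trans (LinearEquiv.neg ℂ)) :
    -- `G ⊆ G'` and `G` is normal in `G'`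
    adjointGroup g ≤ primeGroup (adjointGroup g) ∧
    (∀ φ ∈ primeGroup (adjointGroup g), ∀ u ∈ adjointGroup g,
      φ * u * φ⁻¹ ∈ adjointGroup g) ∧
    -- `-ψ ∈ G'`, `-ψ ∉ G`
    negψ ∈ primeGroup (adjointGroup g) ∧ negψ ∉ adjointGroup g ∧
    -- `G'/G` has order 2, generated by the coset of `-ψ`:
    -- every element of `G'` lies in `G` or in `(-ψ)·G`
    (∀ φ ∈ primeGroup (adjointGroup g),
      φ ∈ adjointGroup g ∨ ∃ u ∈ adjointGroup g, φ = negψ * u) := by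
  have hψ := toLinearEquiv_mem_lieAut ψ
  have hneg := neg_mul_mem_primeGroup_adjointGroup hψ hψt
  obtain rfl : negψ = LinearEquiv.neg ℂ * ψ.toLinearEquiv := hnegψ
  exact ⟨le_primeGroup _, fun φ hφ u hu => conj_mem_adjointGroup_of_mem_primeGroup hφ hu, hneg,
    fun hmem => neg_mul_notMem_lieAut (LieAlgebra.IsSimple.non_abelian ℂ) hψ
      (adjointGroup_le_lieAut hmem),
    fun φ hφ => mem_adjointGroup_or_exists_eq_neg_mul_mul hφ hψ hneg⟩
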